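/- The saturation property fails for SO(2l+1), l ≥ 2: with λ_1 = λ_2 = λ_3 = ω_1 (the standard representation's highest weight), the sum 3ω_1 lies in the root lattice and the SL(2)-analogous invariant space (V(2ω_1) ⊗ V(2ω_1) ⊗ V(2ω_1))^G under doubling is nonzero for m = 2 in a suitable configuration, but more simply: (V(ω_1) ⊗ V(ω_1) ⊗ V(ω_1))^G = 0 while (V(2ω_1) ⊗ V(2ω_1) ⊗ V(2ω_1))^G ≠ 0, even though ω_1 + ω_1 + ω_1 ∈ Q. -/

import Mathlib

/-!
The saturation property fails for `SO(2l+1)`, `l ≥ 2`: with `λ₁ = λ₂ = λ₃ = ω₁` (the highest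
weight of the standard representation `V`) one has `ω₁ + ω₁ + ω₁ ∈ Q` (indeed `ω₁ = e₁` is a
root), and `(V(2ω₁) ⊗ V(2ω₁) ⊗ V(2ω₁))^G ≠ 0` (the case `m = 2`), yet
`(V(ω₁) ⊗ V(ω₁) ⊗ V(ω₁))^G = 0`.

`V(2ω₁)` is encoded as any irreducible representation possessing a highest weight vector of
weight `2ω₁ = (2,0,…,0)`.
-/

open scoped TensorProduct
open Matrix

section OrthFramework

/-- The Gram matrix (antidiagonal `1`s) of the split non-degenerate quadratic form on `ℂ^m`;
over `ℂ` every non-degenerate quadratic form is equivalent to this one. -/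
def antidiagJ (m : ℕ) : Matrix (Fin m) (Fin m) ℂ :=
  Matrix.of fun i j => if (i : ℕ) + (j : ℕ) + 1 = m then 1 else 0

/-- The orthogonal group `O(Ψ) ⊆ GL(m, ℂ)` of the split form `Ψ`. -/
def orthGroup (m : ℕ) : Subgroup (GL (Fin m) ℂ) where
  carrier := {g | ((g : GL (Fin m) ℂ) : Matrix (Fin m) (Fin m) ℂ)ᵀ * antidiagJ m *
      ((g : GL (Fin m) ℂ) : Matrix (Fin m) (Fin m) ℂ) = antidiagJ m}
  one_mem' := by simp
  mul_mem' := by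
    intro a b ha hb
    simp only [Set.mem_setOf_eq, Units.val_mul, Matrix.transpose_mul] at *
    calc (↑b)ᵀ * (↑a)ᵀ * antidiagJ m * ((↑a : Matrix (Fin m) (Fin m) ℂ) * ↑b)
        = (↑b)ᵀ * ((↑a)ᵀ * antidiagJ m * ↑a) * ↑b := by
          simp only [Matrix.mul_assoc]
      _ = antidiagJ m := by rw [ha, hb]
  inv_mem' := by
    intro g hg
    simp only [Set.mem_setOf_eq] at *
    set A : Matrix (Fin m) (Fin m) ℂ := ((g : GL (Fin m) ℂ) : Matrix (Fin m) (Fin m) ℂ)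
    set B : Matrix (Fin m) (Fin m) ℂ := ((g⁻¹ : GL (Fin m) ℂ) : Matrix (Fin m) (Fin m) ℂ)
    have hgg' : A * B = 1 := by
      simp only [A, B, ← Units.val_mul, mul_inv_cancel, Units.val_one]
    calc Bᵀ * antidiagJ m * B
        = Bᵀ * (Aᵀ * antidiagJ m * A) * B := by rw [hg]
      _ = (A * B)ᵀ * antidiagJ m * (A * B) := by
          rw [Matrix.transpose_mul]; simp only [Matrix.mul_assoc]
      _ = antidiagJ m := by rw [hgg']; simp
  
/-- The special orthogonal group `SO(Ψ) ⊆ GL(m, ℂ)`. -/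
def specialOrthGroup (m : ℕ) : Subgroup (GL (Fin m) ℂ) :=
  orthGroup m ⊓ (Matrix.GeneralLinearGroup.det : GL (Fin m) ℂ →* ℂˣ).ker

variable {m : ℕ} {G : Subgroup (GL (Fin m) ℂ)}
variable {V W : Type*} [AddCommGroup V] [Module ℂ V] [AddCommGroup W] [Module ℂ W]

/-- The standard (matrix) representation of a subgroup `G ⊆ GL(m, ℂ)` on `ℂ^m`. -/
noncomputable def stdRep (G : Subgroup (GL (Fin m) ℂ)) : Representation ℂ G (Fin m → ℂ) where
  toFun g := Matrix.toLin' ((g : GL (Fin m) ℂ) : Matrix (Fin m) (Fin m) ℂ)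
  map_one' := by simp; rfl
  map_mul' g h := by
    simp [Units.val_mul, Matrix.toLin'_mul]
    rfl

/-- An element of `G ⊆ GL(m, ℂ)` lying in the diagonal torus. -/
def GIsDiag (g : G) : Prop :=
  ∀ i j, i ≠ j → ((g : GL (Fin m) ℂ) : Matrix (Fin m) (Fin m) ℂ) i j = 0

/-- An element of `G ⊆ GL(m, ℂ)` lying in the upper-triangular unipotent subgroup. -/
def GIsUniUpper (g : G) : Prop :=
  (∀ i, ((g : GL (Fin m) ℂ) : Matrix (Fin m) (Fin m) ℂ) i i = 1) ∧
    ∀ i j : Fin m, j < i → ((g : GL (Fin m) ℂ) : Matrix (Fin m) (Fin m) ℂ) i j = 0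

/-- `ρ` is irreducible. -/
def RepIsIrred (ρ : Representation ℂ G V) : Prop :=
  (∃ v : V, v ≠ 0) ∧ ∀ p : Submodule ℂ V, (∀ g, ∀ x ∈ p, ρ g x ∈ p) → p = ⊥ ∨ p = ⊤

/-- The space of `G`-invariants of `ρ` is nonzero. -/
def RepHasInvariant (ρ : Representation ℂ G V) : Prop := ∃ v : V, v ≠ 0 ∧ ∀ g, ρ g v = v

/-- The tensor product of two representations, with the diagonal `G`-action. -/
noncomputable def tensorRep2 (ρ : Representation ℂ G V) (σ : Representation ℂ G W) :
    Representation ℂ G (V ⊗[ℂ] W) := ρ.tprod σ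

end OrthFramework

section BWeights

variable {l : ℕ} {G : Subgroup (GL (Fin (2 * l + 1)) ℂ)}
variable {V : Type*} [AddCommGroup V] [Module ℂ V]

/-- For `G ⊆ GL(2l+1, ℂ)` of type `B_l` (the split (special) orthogonal group), a weight
`a ∈ ℤ^l` of the diagonal torus `diag(d₁, …, d_l, 1, d_l⁻¹, …, d₁⁻¹)` evaluates on a diagonal
element through the first `l` diagonal entries: `g ↦ ∏ᵢ gᵢᵢ^{aᵢ}`.  `v` is a highest weight
vector of weight `a`: nonzero, fixed by the unipotent radical of the Borel, torus-eigenvector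
with character `a`. -/
def BIsHWVector (ρ : Representation ℂ G V) (a : Fin l → ℤ) (v : V) : Prop :=
  v ≠ 0 ∧ (∀ g, GIsUniUpper g → ρ g v = v) ∧
    ∀ g, GIsDiag g → ρ g v =
      (∏ i : Fin l, ((g : GL (Fin (2 * l + 1)) ℂ) : Matrix (Fin (2 * l + 1)) (Fin (2 * l + 1)) ℂ)
        (Fin.castLE (by omega) i) (Fin.castLE (by omega) i) ^ a i) • v

/-- The irreducible representation `V(a)` of highest weight `a` occurs in `ρ`. -/
def BOccurs (ρ : Representation ℂ G V) (a : Fin l → ℤ) : Prop := ∃ v, BIsHWVector ρ a v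

/-- The roots of type `B_l`, as integer vectors: `±eᵢ ± eⱼ (i ≠ j)` and `±eᵢ`. -/
def BRootsZ (l : ℕ) : Set (Fin l → ℤ) :=
  {v | (∃ i j : Fin l, i ≠ j ∧
          (v = Pi.single i 1 - Pi.single j 1 ∨ v = Pi.single i 1 + Pi.single j 1 ∨
           v = -(Pi.single i 1) - Pi.single j 1)) ∨
       (∃ i : Fin l, v = Pi.single i 1 ∨ v = -(Pi.single i 1))}

end BWeights

section OperatorLemmas

open Polynomial

variable {U : Type*} [AddCommGroup U] [Module ℂ U]

/-- The vectors annihilated by a nonzero polynomial in `D` all of whose roots lie in `A`. -/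
def rootTorsion (D : Module.End ℂ U) (A : Set ℂ) : Submodule ℂ U where
  carrier := {z | ∃ q : ℂ[X], q ≠ 0 ∧ (∀ α, q.eval α = 0 → α ∈ A) ∧ aeval D q z = 0}
  zero_mem' := ⟨1, one_ne_zero, by simp, by simp⟩
  add_mem' := by
    rintro x y ⟨p, hp, hpA, hpx⟩ ⟨q, hq, hqA, hqy⟩
    refine ⟨p * q, mul_ne_zero hp hq, fun α h => ?_, ?_⟩
    · rw [eval_mul, mul_eq_zero] at h
      exact h.elim (hpA α) (hqA α)
    · have h : aeval D (p * q) x = 0 := by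
        rw [mul_comm, map_mul, Module.End.mul_apply, hpx, map_zero]
      rw [map_add, h, map_mul, Module.End.mul_apply, hqy, map_zero, add_zero]
  smul_mem' := by
    rintro c x ⟨p, hp, hpA, hpx⟩
    exact ⟨p, hp, hpA, by rw [map_smul, hpx, smul_zero]⟩

lemma mem_rootTorsion_of_sub_smul_mem {D : Module.End ℂ U} {A : Set ℂ} {c : ℂ} (hc : c ∈ A)
    {z : U} (h : D z - c • z ∈ rootTorsion D A) : z ∈ rootTorsion D A := by
  obtain ⟨q, hq, hqA, hqz⟩ := h
  refine ⟨q * (X - C c), mul_ne_zero hq (X_sub_C_ne_zero c), fun α h => ?_, ?_⟩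
  · rw [eval_mul, mul_eq_zero] at h
    refine h.elim (hqA α) fun h => ?_
    have : α = c := by simpa [sub_eq_zero] using h
    exact this ▸ hc
  · simpa [Module.End.mul_apply, Module.algebraMap_end_apply] using hqz

lemma mem_rootTorsion_of_eigenvector {D : Module.End ℂ U} {A : Set ℂ} {c : ℂ} (hc : c ∈ A)
    {z : U} (h : D z = c • z) : z ∈ rootTorsion D A :=
  mem_rootTorsion_of_sub_smul_mem hc (by rw [h, sub_self]; exact zero_mem _)

lemma aeval_apply_eigenvector {D : Module.End ℂ U} {c : ℂ} {z : U} (h : D z = c • z) (q : ℂ[X]) :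
    aeval D q z = q.eval c • z := by
  by_cases hz : z = 0
  · simp [hz]
  · exact Module.End.aeval_apply_of_hasEigenvector ⟨Module.End.mem_eigenspace_iff.2 h, hz⟩

lemma notMem_rootTorsion_of_eigenvector {D : Module.End ℂ U} {A : Set ℂ} {c : ℂ} (hc : c ∉ A)
    {z : U} (hz : z ≠ 0) (h : D z = c • z) : z ∉ rootTorsion D A := by
  rintro ⟨q, hq, hqA, hqz⟩
  rw [aeval_apply_eigenvector h, smul_eq_zero] at hqz
  exact hc (hqA c (hqz.resolve_right hz))

lemma commute_aeval {D D' : Module.End ℂ U} (h : Commute D D') (q : ℂ[X]) :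
    Commute (aeval D q) D' := by
  induction q using Polynomial.induction_on' with
  | add a b ha hb => rw [map_add]; exact ha.add_left hb
  | monomial n a =>
    rw [aeval_monomial]
    exact Commute.mul_left (Algebra.commutes a D') (h.pow_left n)

lemma eq_zero_of_mem_rootTorsion_inv [FiniteDimensional ℂ U] {D D' : Module.End ℂ U}
    (hDD' : D * D' = 1) (hD'D : D' * D = 1) {A B : Set ℂ} (hAB : ∀ α ∈ A, α⁻¹ ∉ B) {z : U}
    (hA : z ∈ rootTorsion D A) (hB : z ∈ rootTorsion D' B) : z = 0 := by
  obtain ⟨p, hp, hpA, hpz⟩ := hA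
  obtain ⟨q, hq, hqB, hqz⟩ := hB
  by_contra hz
  have hcomm : Commute D D' := hDD'.trans hD'D.symm
  set K := LinearMap.ker (aeval D p) ⊓ LinearMap.ker (aeval D' q) with hKdef
  have hK : ∀ x ∈ K, D x ∈ K := by
    rintro x ⟨h1, h2⟩
    rw [SetLike.mem_coe, LinearMap.mem_ker] at h1 h2
    have c1 := (commute_aeval (Commute.refl D) p).eq
    have c2 := (commute_aeval hcomm.symm q).eq
    refine ⟨?_, ?_⟩
    · rw [SetLike.mem_coe, LinearMap.mem_ker, ← Module.End.mul_apply, c1, Module.End.mul_apply, h1,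
        map_zero]
    · rw [SetLike.mem_coe, LinearMap.mem_ker, ← Module.End.mul_apply, c2, Module.End.mul_apply, h2,
        map_zero]
  have : Nontrivial K :=
    (Submodule.nontrivial_iff_ne_bot).2 fun h => hz (by
      have : z ∈ K := ⟨hpz, hqz⟩
      rwa [h, Submodule.mem_bot] at this)
  obtain ⟨α, hα⟩ := Module.End.exists_eigenvalue (D.restrict hK)
  obtain ⟨⟨y, hy⟩, hyα, hy0⟩ := hα.exists_hasEigenvector
  have hy0 : y ≠ 0 := fun h => hy0 (by simpa using h)
  have hDy : D y = α • y := congrArg Subtype.val (Module.End.mem_eigenspace_iff.1 hyα)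
  have hα0 : α ≠ 0 := by
    rintro rfl
    apply hy0
    rw [← Module.End.one_apply (R := ℂ) y, ← hD'D, Module.End.mul_apply, hDy, zero_smul, map_zero]
  have hD'y : D' y = α⁻¹ • y := by
    have : D' (D y) = y := by rw [← Module.End.mul_apply, hD'D, Module.End.one_apply]
    rw [hDy, map_smul] at this
    rw [← this, smul_smul, inv_mul_cancel₀ hα0, one_smul, this]
  have h1 := aeval_apply_eigenvector hDy p
  have h2 := aeval_apply_eigenvector hD'y q
  rw [LinearMap.mem_ker.1 hy.1, eq_comm, smul_eq_zero, or_iff_left hy0] at h1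
  rw [LinearMap.mem_ker.1 hy.2, eq_comm, smul_eq_zero, or_iff_left hy0] at h2
  exact hAB α (hpA α h1) (hqB _ h2)

lemma pow_mul_aeval_mem_rootTorsion {D N : Module.End ℂ U} (hN : IsNilpotent (N - 1))
    (hDN : D * N = N ^ 2 * D) {w : U} {ν : ℂ} (hw : D w = ν • w) {A : Set ℂ} {k : ℕ}
    (hA : ∀ j, k ≤ j → ν * 2 ^ j ∈ A) (r : ℂ[X]) :
    aeval (N - 1) (X ^ k * r) w ∈ rootTorsion D A := by
  obtain ⟨d, hd⟩ := hN
  set n := N - 1 with hn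
  have hDn : D * n = n * (n + 2) * D := by
    have : n * (n + 2) = N ^ 2 - 1 := by rw [hn]; noncomm_ring
    rw [this, sub_mul, ← hDN, hn]; noncomm_ring
  have hDnk : ∀ k : ℕ, D * n ^ k = (n * (n + 2)) ^ k * D := by
    intro k
    exact SemiconjBy.pow_right (show SemiconjBy D n (n * (n + 2)) from hDn) k
  obtain ⟨i, hi⟩ : ∃ i, d ≤ k + i := ⟨d, by omega⟩
  induction i generalizing k r with
  | zero =>
    have : n ^ k = 0 := pow_eq_zero_of_le (by omega) hd
    simp [this]
  | succ i ih =>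
    have hk : ∀ r, aeval n (X ^ (k + 1) * r) w ∈ rootTorsion D A := fun r =>
      ih (fun j hj => hA j (by omega)) r (by omega)
    have hz : (n ^ k) w ∈ rootTorsion D A := by
      refine mem_rootTorsion_of_sub_smul_mem (hA k le_rfl) ?_
      obtain ⟨s, hs⟩ : (X : ℂ[X]) ∣ (X + 2) ^ k - 2 ^ k := by
        have := sub_dvd_pow_sub_pow (X + 2 : ℂ[X]) 2 k
        rwa [add_sub_cancel_right] at this
      have h1 : D ((n ^ k) w) = ν • aeval n (X ^ k * (X + 2) ^ k : ℂ[X]) w := by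
        rw [← Module.End.mul_apply, hDnk, Module.End.mul_apply, hw, map_smul]
        congr 2
        rw [← mul_pow]
        simp [map_ofNat (aeval n) 2]
      have h2 : (ν * 2 ^ k) • (n ^ k) w = ν • aeval n (X ^ k * 2 ^ k : ℂ[X]) w := by
        rw [mul_smul]
        congr 1
        have : (2 : ℂ[X]) ^ k = C (2 ^ k) := by rw [map_pow, map_ofNat]
        rw [this, mul_comm, ← smul_eq_C_mul]
        simp
      rw [h1, h2, ← smul_sub, ← LinearMap.sub_apply, ← map_sub, ← mul_sub, hs, ← mul_assoc,
        ← pow_succ]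
      exact Submodule.smul_mem _ _ (hk s)
    have hr : X ^ k * r = r.eval 0 • X ^ k + X ^ (k + 1) * r.divX := by
      conv_lhs => rw [← divX_mul_X_add r]
      rw [smul_eq_C_mul, coeff_zero_eq_eval_zero]
      ring
    rw [hr, map_add, LinearMap.add_apply]
    refine add_mem ?_ (hk _)
    simpa using Submodule.smul_mem _ (r.eval 0) hz

lemma apply_sub_self_mem_rootTorsion {D N : Module.End ℂ U} (hN : IsNilpotent (N - 1))
    (hDN : D * N = N ^ 2 * D) {w : U} {ν : ℂ} (hw : D w = ν • w) {A : Set ℂ}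
    (hA : ∀ j, 1 ≤ j → ν * 2 ^ j ∈ A) : N w - w ∈ rootTorsion D A := by
  simpa using pow_mul_aeval_mem_rootTorsion hN hDN hw hA 1

lemma isNilpotent_sub_one_of_conj_pow [FiniteDimensional ℂ U] {N : Module.End ℂ U} (hu : IsUnit N)
    (h : ∀ R : ℕ, 0 < R → ∃ D : (Module.End ℂ U)ˣ, (D : Module.End ℂ U) * N * ↑D⁻¹ = N ^ R) :
    IsNilpotent (N - 1) := by
  have hspec : ∀ R : ℕ, 0 < R → spectrum ℂ (N ^ R) = spectrum ℂ N := by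
    intro R hR
    obtain ⟨D, hD⟩ := h R hR
    rw [← hD, spectrum.units_conjugate]
  have hpow : ∀ R : ℕ, 0 < R → ∀ μ ∈ spectrum ℂ N, μ ^ R ∈ spectrum ℂ N := by
    intro R hR μ hμ
    rw [← hspec R hR, spectrum.map_pow_of_pos N hR]
    exact ⟨μ, hμ, rfl⟩
  have hfin : (spectrum ℂ N).Finite := Module.End.finite_spectrum N
  have hord : ∀ μ ∈ spectrum ℂ N, ∃ r : ℕ, 0 < r ∧ μ ^ r = 1 := by
    intro μ hμ
    have hμ0 : μ ≠ 0 := by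
      rintro rfl
      exact spectrum.zero_notMem_iff ℂ |>.2 hu hμ
    by_contra! hcon
    refine Set.infinite_of_injective_forall_mem (f := fun i : ℕ => μ ^ (i + 1)) ?_
      (fun i => hpow (i + 1) i.succ_pos μ hμ) hfin
    intro i j hij
    by_contra hne
    wlog hlt : i < j generalizing i j
    · exact this hij.symm (Ne.symm hne) (by omega)
    refine hcon (j - i) (by omega) ?_
    have : μ ^ (i + 1) * μ ^ (j - i) = μ ^ (i + 1) * 1 := by
      rw [← pow_add, mul_one]
      convert hij.symm using 2
      omega
    exact mul_left_cancel₀ (pow_ne_zero _ hμ0) this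
  choose! r hr0 hr1 using hord
  set R := ∏ μ ∈ hfin.toFinset, r μ
  have hR : 0 < R := Finset.prod_pos fun μ hμ => hr0 μ (hfin.mem_toFinset.1 hμ)
  have hone : ∀ μ ∈ spectrum ℂ N, μ = 1 := by
    intro μ hμ
    rw [← hspec R hR, spectrum.map_pow_of_pos N hR] at hμ
    obtain ⟨μ', hμ', rfl⟩ := hμ
    obtain ⟨s, hs⟩ := Finset.dvd_prod_of_mem r (hfin.mem_toFinset.2 hμ')
    change μ' ^ R = 1
    rw [show R = r μ' * s from hs, pow_mul, hr1 μ' hμ', one_pow]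
  have htop : Module.End.maxGenEigenspace N 1 = ⊤ := by
    rw [eq_top_iff, ← Module.End.iSup_maxGenEigenspace_eq_top N]
    refine iSup_le fun μ => ?_
    by_cases hμ : N.HasEigenvalue μ
    · rw [hone μ (Module.End.hasEigenvalue_iff_mem_spectrum.1 hμ)]
    · have : Module.End.maxGenEigenspace N μ = ⊥ := by
        by_contra hne
        exact hμ (Module.End.hasUnifEigenvalue_iff_hasUnifEigenvalue_one (by simp) |>.1 hne)
      rw [this]
      exact bot_le
  refine ⟨Module.finrank ℂ U, LinearMap.ext fun x => ?_⟩
  have hx : x ∈ Module.End.maxGenEigenspace N 1 := htop ▸ Submodule.mem_top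
  rw [Module.End.maxGenEigenspace_eq_genEigenspace_finrank, Module.End.mem_genEigenspace_nat] at hx
  simpa using hx

end OperatorLemmas

section SplitForm

variable {m : ℕ}

/-- The symmetric bilinear form with Gram matrix `antidiagJ m`. -/
noncomputable def splitForm (m : ℕ) : LinearMap.BilinForm ℂ (Fin m → ℂ) :=
  Matrix.toLinearMap₂' ℂ (antidiagJ m)

lemma antidiagJ_mulVec (y : Fin m → ℂ) (i : Fin m) : (antidiagJ m *ᵥ y) i = y i.rev := by
  rw [Matrix.mulVec, dotProduct, Finset.sum_eq_single i.rev]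
  · have : (i : ℕ) + (i.rev : ℕ) + 1 = m := by rw [Fin.val_rev]; omega
    rw [antidiagJ, Matrix.of_apply, if_pos this, one_mul]
  · intro j _ hj
    have : ¬ ((i : ℕ) + (j : ℕ) + 1 = m) := fun h => hj (Fin.ext (by rw [Fin.val_rev]; omega))
    simp [antidiagJ, this]
  · simp

lemma splitForm_eq_dotProduct (x y : Fin m → ℂ) : splitForm m x y = x ⬝ᵥ (antidiagJ m *ᵥ y) :=
  Matrix.toLinearMap₂'_apply' _ _ _

lemma splitForm_apply (x y : Fin m → ℂ) : splitForm m x y = ∑ i, x i * y i.rev := by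
  simp only [splitForm_eq_dotProduct, dotProduct, antidiagJ_mulVec]

lemma splitForm_comm (x y : Fin m → ℂ) : splitForm m x y = splitForm m y x := by
  rw [splitForm_apply, splitForm_apply]
  refine Fintype.sum_equiv Fin.revPerm _ _ fun i => ?_
  simp [mul_comm]

lemma splitForm_single_left (i : Fin m) (y : Fin m → ℂ) :
    splitForm m (Pi.single i 1) y = y i.rev := by
  rw [splitForm_eq_dotProduct, single_one_dotProduct, antidiagJ_mulVec]

lemma splitForm_single_right (x : Fin m → ℂ) (i : Fin m) :
    splitForm m x (Pi.single i 1) = x i.rev := by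
  rw [splitForm_comm, splitForm_single_left]

lemma splitForm_single_single (i j : Fin m) :
    splitForm m (Pi.single i 1) (Pi.single j 1) = if j = i.rev then 1 else 0 := by
  rw [splitForm_single_left, Pi.single_apply]
  simp only [eq_comm]

lemma transpose_mul_antidiagJ_mul {M : Matrix (Fin m) (Fin m) ℂ}
    (h : ∀ x y, splitForm m (M *ᵥ x) (M *ᵥ y) = splitForm m x y) :
    Mᵀ * antidiagJ m * M = antidiagJ m := by
  ext i j
  have := h (Pi.single i 1) (Pi.single j 1)
  rw [splitForm_eq_dotProduct, splitForm_eq_dotProduct, single_one_dotProduct,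
    Matrix.mulVec_single_one, Matrix.mulVec_single_one, Matrix.mulVec_single_one] at this
  rw [Matrix.mul_assoc]
  exact this

lemma antidiagJ_det_ne_zero : (antidiagJ m).det ≠ 0 := by
  have h : antidiagJ m * antidiagJ m = 1 := by
    refine Matrix.toLin'.injective (LinearMap.ext fun x => funext fun i => ?_)
    simp [antidiagJ_mulVec]
  intro h0
  have := congrArg Matrix.det h
  simp [h0] at this

lemma exists_stdRep_eq_comp (h : (Fin m → ℂ) →ₗ[ℂ] (Fin m → ℂ))
    (hb : ∀ x y, splitForm m (h x) (h y) = splitForm m x y) :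
    ∃ g : specialOrthGroup m, ∀ x, stdRep _ g x = h (h x) := by
  set M := LinearMap.toMatrix' h
  have hM : ∀ x, M *ᵥ x = h x := LinearMap.toMatrix'_mulVec h
  have hJ : Mᵀ * antidiagJ m * M = antidiagJ m :=
    transpose_mul_antidiagJ_mul fun x y => by rw [hM, hM, hb]
  have hdet : M.det * M.det = 1 := by
    have := congrArg Matrix.det hJ
    rw [det_mul, det_mul, det_transpose] at this
    exact mul_right_cancel₀ antidiagJ_det_ne_zero (by linear_combination this)
  have hdet2 : (M * M).det = 1 := by rw [det_mul, hdet]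
  refine ⟨⟨Matrix.GeneralLinearGroup.mkOfDetNeZero (M * M) (by simp [hdet2]), ?_, ?_⟩, fun x => ?_⟩
  · change (M * M)ᵀ * antidiagJ m * (M * M) = antidiagJ m
    calc (M * M)ᵀ * antidiagJ m * (M * M) = Mᵀ * (Mᵀ * antidiagJ m * M) * M := by
          rw [Matrix.transpose_mul]; simp only [Matrix.mul_assoc]
      _ = antidiagJ m := by rw [hJ, hJ]
  · exact (MonoidHom.mem_ker).2 (Units.ext hdet2)
  · change (M * M) *ᵥ x = _
    rw [← Matrix.mulVec_mulVec, hM, hM]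

lemma stdRep_injective {G : Subgroup (GL (Fin m) ℂ)} {g h : G}
    (H : ∀ x, stdRep G g x = stdRep G h x) : g = h :=
  Subtype.ext (Units.ext (Matrix.toLin'.injective (LinearMap.ext H)))

lemma stdRep_apply_eq_mulVec {G : Subgroup (GL (Fin m) ℂ)} (g : G) (x : Fin m → ℂ) :
    stdRep G g x = ((g : GL (Fin m) ℂ) : Matrix (Fin m) (Fin m) ℂ) *ᵥ x := rfl

lemma coe_apply_eq_stdRep {G : Subgroup (GL (Fin m) ℂ)} (g : G) (i j : Fin m) :
    ((g : GL (Fin m) ℂ) : Matrix (Fin m) (Fin m) ℂ) i j = stdRep G g (Pi.single j 1) i := by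
  rw [stdRep_apply_eq_mulVec, Matrix.mulVec_single_one]; rfl

lemma splitForm_stdRep (g : specialOrthGroup m) (x y : Fin m → ℂ) :
    splitForm m (stdRep _ g x) (stdRep _ g y) = splitForm m x y := by
  have h : ((g : GL (Fin m) ℂ) : Matrix (Fin m) (Fin m) ℂ)ᵀ * antidiagJ m * g.1.1 = antidiagJ m :=
    g.2.1
  rw [splitForm_eq_dotProduct, splitForm_eq_dotProduct, stdRep_apply_eq_mulVec,
    stdRep_apply_eq_mulVec, ← vecMul_transpose, ← dotProduct_mulVec, mulVec_mulVec,
    mulVec_mulVec, h]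

lemma splitForm_stdRep_left (g : specialOrthGroup m) (x y : Fin m → ℂ) :
    splitForm m (stdRep _ g x) y = splitForm m x (stdRep _ g⁻¹ y) := by
  rw [← splitForm_stdRep g x, Representation.self_inv_apply]

end SplitForm

section Transformations

variable {m : ℕ}

/-- The Eichler transformation attached to an isotropic vector `e` and a vector `y` orthogonal
to `e`. -/
noncomputable def eichlerMap (e y : Fin m → ℂ) : (Fin m → ℂ) →ₗ[ℂ] (Fin m → ℂ) :=
  LinearMap.id + (splitForm m e).smulRight y - (splitForm m y).smulRight e
    - (splitForm m e).smulRight ((splitForm m y y / 2) • e)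

lemma eichlerMap_apply (e y x : Fin m → ℂ) :
    eichlerMap e y x = x + splitForm m e x • y - splitForm m y x • e
      - (splitForm m e x * (splitForm m y y / 2)) • e := by
  simp [eichlerMap, mul_smul]

lemma splitForm_eichlerMap {e y : Fin m → ℂ} (he : splitForm m e e = 0) (hy : splitForm m e y = 0)
    (x z : Fin m → ℂ) :
    splitForm m (eichlerMap e y x) (eichlerMap e y z) = splitForm m x z := by
  have hy' : splitForm m y e = 0 := by rw [splitForm_comm, hy]
  simp only [eichlerMap_apply, map_add, map_sub, map_smul, LinearMap.add_apply, LinearMap.sub_apply,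
    LinearMap.smul_apply, smul_eq_mul, he, hy, hy', splitForm_comm x e, splitForm_comm x y]
  ring

lemma eichlerMap_eichlerMap {e y y' : Fin m → ℂ} (he : splitForm m e e = 0)
    (hy : splitForm m e y = 0) (hy' : splitForm m e y' = 0) (x : Fin m → ℂ) :
    eichlerMap e y (eichlerMap e y' x) = eichlerMap e (y + y') x := by
  have hye : splitForm m y e = 0 := by rw [splitForm_comm, hy]
  have hye' : splitForm m y' e = 0 := by rw [splitForm_comm, hy']
  simp only [eichlerMap_apply, map_add, map_sub, map_smul, LinearMap.add_apply,
    he, hy', hye, splitForm_comm y' y]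
  module

lemma exists_stdRep_eq_eichlerMap {e y : Fin m → ℂ} (he : splitForm m e e = 0)
    (hy : splitForm m e y = 0) :
    ∃ g : specialOrthGroup m, ∀ x, stdRep _ g x = eichlerMap e y x := by
  have hy2 : splitForm m e ((1 / 2 : ℂ) • y) = 0 := by simp [hy]
  obtain ⟨g, hg⟩ := exists_stdRep_eq_comp _ (splitForm_eichlerMap he hy2)
  refine ⟨g, fun x => ?_⟩
  rw [hg, eichlerMap_eichlerMap he hy2 hy2, ← add_smul]
  norm_num

open Classical in
/-- The Eichler transformation as an element of the special orthogonal group (`1` if `e` is not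
isotropic or `y` is not orthogonal to `e`). -/
noncomputable def eichler (e y : Fin m → ℂ) : specialOrthGroup m :=
  if h : splitForm m e e = 0 ∧ splitForm m e y = 0 then
    (exists_stdRep_eq_eichlerMap h.1 h.2).choose else 1

lemma stdRep_eichler {e y : Fin m → ℂ} (he : splitForm m e e = 0) (hy : splitForm m e y = 0)
    (x : Fin m → ℂ) : stdRep _ (eichler e y) x = eichlerMap e y x := by
  have h : splitForm m e e = 0 ∧ splitForm m e y = 0 := ⟨he, hy⟩
  rw [eichler, dif_pos h]
  exact (exists_stdRep_eq_eichlerMap h.1 h.2).choose_spec x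

/-- The map scaling `e` by `c` and `f` by `c⁻¹`, for a hyperbolic pair `e`, `f`. -/
noncomputable def pairTorusMap (e f : Fin m → ℂ) (c : ℂ) : (Fin m → ℂ) →ₗ[ℂ] (Fin m → ℂ) :=
  LinearMap.id + (c - 1) • (splitForm m f).smulRight e + (c⁻¹ - 1) • (splitForm m e).smulRight f

lemma pairTorusMap_apply (e f : Fin m → ℂ) (c : ℂ) (x : Fin m → ℂ) :
    pairTorusMap e f c x = x + ((c - 1) * splitForm m f x) • e
      + ((c⁻¹ - 1) * splitForm m e x) • f := by
  simp [pairTorusMap, mul_smul]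

/-- `e` and `f` are isotropic vectors pairing to `1`. -/
structure IsHyperbolicPair (e f : Fin m → ℂ) : Prop where
  left : splitForm m e e = 0
  right : splitForm m f f = 0
  pair : splitForm m e f = 1

namespace IsHyperbolicPair

variable {e f : Fin m → ℂ}

lemma pair' (h : IsHyperbolicPair e f) : splitForm m f e = 1 := by rw [splitForm_comm, h.pair]

lemma symm (h : IsHyperbolicPair e f) : IsHyperbolicPair f e := ⟨h.right, h.left, h.pair'⟩

lemma splitForm_pairTorusMap (h : IsHyperbolicPair e f) {c : ℂ} (hc : c ≠ 0) (x z : Fin m → ℂ) :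
    splitForm m (pairTorusMap e f c x) (pairTorusMap e f c z) = splitForm m x z := by
  simp only [pairTorusMap_apply, map_add, map_smul, LinearMap.add_apply,
    LinearMap.smul_apply, smul_eq_mul, h.left, h.right, h.pair, h.pair', splitForm_comm x e,
    splitForm_comm x f]
  field_simp
  ring

lemma pairTorusMap_pairTorusMap (h : IsHyperbolicPair e f) (c d : ℂ) (x : Fin m → ℂ) :
    pairTorusMap e f c (pairTorusMap e f d x) = pairTorusMap e f (c * d) x := by
  simp only [pairTorusMap_apply, map_add, map_smul, h.left, h.right, h.pair, h.pair',
    mul_inv]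
  module

lemma exists_stdRep_eq_pairTorusMap (h : IsHyperbolicPair e f) {c : ℂ} (hc : c ≠ 0) :
    ∃ g : specialOrthGroup m, ∀ x, stdRep _ g x = pairTorusMap e f c x := by
  obtain ⟨d, hd⟩ := IsAlgClosed.exists_pow_nat_eq c two_pos
  have hd0 : d ≠ 0 := by rintro rfl; simp at hd; exact hc hd.symm
  obtain ⟨g, hg⟩ := exists_stdRep_eq_comp _ (h.splitForm_pairTorusMap hd0)
  exact ⟨g, fun x => by rw [hg, h.pairTorusMap_pairTorusMap, ← sq, hd]⟩

end IsHyperbolicPair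

open Classical in
/-- `pairTorusMap` as an element of the special orthogonal group (`1` if `e`, `f` is not a
hyperbolic pair or `c = 0`). -/
noncomputable def pairTorus (e f : Fin m → ℂ) (c : ℂ) : specialOrthGroup m :=
  if h : IsHyperbolicPair e f ∧ c ≠ 0 then (h.1.exists_stdRep_eq_pairTorusMap h.2).choose else 1

lemma IsHyperbolicPair.stdRep_torus {e f : Fin m → ℂ} (h : IsHyperbolicPair e f) {c : ℂ}
    (hc : c ≠ 0) (x : Fin m → ℂ) : stdRep _ (pairTorus e f c) x = pairTorusMap e f c x := by
  have h' : IsHyperbolicPair e f ∧ c ≠ 0 := ⟨h, hc⟩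
  rw [pairTorus, dif_pos h']
  exact (h'.1.exists_stdRep_eq_pairTorusMap h'.2).choose_spec x

lemma eichler_mul_eichler {e y y' : Fin m → ℂ} (he : splitForm m e e = 0)
    (hy : splitForm m e y = 0) (hy' : splitForm m e y' = 0) :
    eichler e y * eichler e y' = eichler e (y + y') := by
  have hyy : splitForm m e (y + y') = 0 := by rw [map_add, hy, hy', add_zero]
  refine stdRep_injective fun x => ?_
  rw [map_mul, Module.End.mul_apply, stdRep_eichler he hy, stdRep_eichler he hy',
    stdRep_eichler he hyy, eichlerMap_eichlerMap he hy hy']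

lemma eichler_zero {e : Fin m → ℂ} (he : splitForm m e e = 0) : eichler e 0 = 1 := by
  refine stdRep_injective fun x => ?_
  rw [stdRep_eichler he (by simp), eichlerMap_apply]
  simp

lemma eichler_pow {e y : Fin m → ℂ} (he : splitForm m e e = 0) (hy : splitForm m e y = 0) (n : ℕ) :
    eichler e y ^ n = eichler e ((n : ℂ) • y) := by
  induction n with
  | zero => simp [eichler_zero he]
  | succ n ih =>
    rw [pow_succ, ih, eichler_mul_eichler he (by simp [hy]) hy]
    congr 1
    push_cast
    module

namespace IsHyperbolicPair

variable {e f : Fin m → ℂ}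

lemma torus_mul_torus (h : IsHyperbolicPair e f) {c d : ℂ} (hc : c ≠ 0) (hd : d ≠ 0) :
    pairTorus e f c * pairTorus e f d = pairTorus e f (c * d) := by
  refine stdRep_injective fun x => ?_
  rw [map_mul, Module.End.mul_apply, h.stdRep_torus hc, h.stdRep_torus hd,
    h.stdRep_torus (mul_ne_zero hc hd), h.pairTorusMap_pairTorusMap]

lemma torus_one (h : IsHyperbolicPair e f) : pairTorus e f 1 = 1 := by
  refine stdRep_injective fun x => ?_
  rw [h.stdRep_torus one_ne_zero, pairTorusMap_apply]
  simp

lemma torus_inv (h : IsHyperbolicPair e f) {c : ℂ} (hc : c ≠ 0) :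
    (pairTorus e f c)⁻¹ = pairTorus e f c⁻¹ := by
  rw [inv_eq_iff_mul_eq_one, h.torus_mul_torus hc (inv_ne_zero hc), mul_inv_cancel₀ hc, h.torus_one]

lemma torus_swap (h : IsHyperbolicPair e f) {c : ℂ} (hc : c ≠ 0) :
    pairTorus f e c = (pairTorus e f c)⁻¹ := by
  rw [h.torus_inv hc]
  refine stdRep_injective fun x => ?_
  rw [h.stdRep_torus (inv_ne_zero hc), h.symm.stdRep_torus hc, pairTorusMap_apply,
    pairTorusMap_apply, inv_inv]
  module

lemma torus_mul_eichler (h : IsHyperbolicPair e f) {c : ℂ} (hc : c ≠ 0) {y : Fin m → ℂ}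
    (hy : splitForm m e y = 0) (hyf : splitForm m f y = 0) :
    pairTorus e f c * eichler e y = eichler e (c • y) * pairTorus e f c := by
  have hcy : splitForm m e (c • y) = 0 := by simp [hy]
  have hye : splitForm m y e = 0 := by rw [splitForm_comm, hy]
  have hyf' : splitForm m y f = 0 := by rw [splitForm_comm, hyf]
  refine stdRep_injective fun x => ?_
  simp only [map_mul, Module.End.mul_apply, h.stdRep_torus hc, stdRep_eichler h.left hy,
    stdRep_eichler h.left hcy, eichlerMap_apply, pairTorusMap_apply, map_add, map_sub, map_smul,
    LinearMap.smul_apply, smul_eq_mul, h.left, h.pair, h.pair', hy, hyf, hye, hyf']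
  match_scalars <;> field_simp <;> ring

lemma stdRep_torus_left (h : IsHyperbolicPair e f) {c : ℂ} (hc : c ≠ 0) :
    stdRep _ (pairTorus e f c) e = c • e := by
  rw [h.stdRep_torus hc, pairTorusMap_apply, h.left, h.pair']
  module

lemma stdRep_torus_right (h : IsHyperbolicPair e f) {c : ℂ} (hc : c ≠ 0) :
    stdRep _ (pairTorus e f c) f = c⁻¹ • f := by
  rw [h.stdRep_torus hc, pairTorusMap_apply, h.right, h.pair]
  module

lemma stdRep_torus_of_orthogonal (h : IsHyperbolicPair e f) {c : ℂ} (hc : c ≠ 0) {x : Fin m → ℂ}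
    (he : splitForm m e x = 0) (hf : splitForm m f x = 0) : stdRep _ (pairTorus e f c) x = x := by
  rw [h.stdRep_torus hc, pairTorusMap_apply, he, hf]
  module

end IsHyperbolicPair

end Transformations

section Fixators

variable {m : ℕ}

/-- The subgroup fixing a vector of a representation. -/
def vectorStabilizer {G U : Type*} [Group G] [AddCommGroup U] [Module ℂ U]
    (ρ : Representation ℂ G U) (v : U) : Subgroup G where
  carrier := {g | ρ g v = v}
  one_mem' := by simp
  mul_mem' {g h} hg hh := by
    change ρ (g * h) v = v
    rw [map_mul, Module.End.mul_apply, show ρ h v = v from hh, show ρ g v = v from hg]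
  inv_mem' {g} hg := by
    change ρ g⁻¹ v = v
    conv_lhs => rw [← show ρ g v = v from hg]
    exact ρ.inv_self_apply g v

/-- The pointwise stabilizer of a set of vectors of the standard representation. -/
noncomputable def fixator (X : Set (Fin m → ℂ)) : Subgroup (specialOrthGroup m) :=
  ⨅ x ∈ X, vectorStabilizer (stdRep _) x

lemma mem_vectorStabilizer {G U : Type*} [Group G] [AddCommGroup U] [Module ℂ U]
    {ρ : Representation ℂ G U} {v : U} {g : G} : g ∈ vectorStabilizer ρ v ↔ ρ g v = v := Iff.rfl

lemma mem_fixator {X : Set (Fin m → ℂ)} {g : specialOrthGroup m} :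
    g ∈ fixator X ↔ ∀ x ∈ X, stdRep _ g x = x := by
  simp [fixator, Subgroup.mem_iInf, mem_vectorStabilizer]

/-- The orthogonal complement of a set of vectors with respect to `splitForm`. -/
noncomputable def perp (X : Set (Fin m → ℂ)) : Submodule ℂ (Fin m → ℂ) :=
  ⨅ x ∈ X, LinearMap.ker (splitForm m x)

lemma mem_perp {X : Set (Fin m → ℂ)} {y : Fin m → ℂ} :
    y ∈ perp X ↔ ∀ x ∈ X, splitForm m x y = 0 := by
  simp [perp, Submodule.mem_iInf]

lemma mem_perp_insert_insert {X : Set (Fin m → ℂ)} {e f y : Fin m → ℂ} :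
    y ∈ perp (insert e (insert f X)) ↔
      splitForm m e y = 0 ∧ splitForm m f y = 0 ∧ y ∈ perp X := by
  simp [mem_perp]

lemma stdRep_mem_perp {X : Set (Fin m → ℂ)} {g : specialOrthGroup m} (hg : g ∈ fixator X)
    {x : Fin m → ℂ} (hx : x ∈ perp X) : stdRep _ g x ∈ perp X := by
  refine mem_perp.2 fun z hz => ?_
  rw [← mem_fixator.1 hg z hz, splitForm_stdRep, mem_perp.1 hx z hz]

variable {X : Set (Fin m → ℂ)} {e f : Fin m → ℂ}

lemma eichler_mem_fixator (he : splitForm m e e = 0) (heX : e ∈ perp X) {y : Fin m → ℂ}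
    (hey : splitForm m e y = 0) (hy : y ∈ perp X) : eichler e y ∈ fixator X := by
  refine mem_fixator.2 fun x hx => ?_
  rw [stdRep_eichler he hey, eichlerMap_apply, splitForm_comm e, splitForm_comm y x,
    mem_perp.1 hy x hx, mem_perp.1 heX x hx]
  module

lemma pairTorus_mem_fixator (h : IsHyperbolicPair e f) (heX : e ∈ perp X) (hfX : f ∈ perp X)
    {c : ℂ} (hc : c ≠ 0) : pairTorus e f c ∈ fixator X :=
  mem_fixator.2 fun x hx => h.stdRep_torus_of_orthogonal hc
    (by rw [splitForm_comm, mem_perp.1 heX x hx]) (by rw [splitForm_comm, mem_perp.1 hfX x hx])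

lemma IsHyperbolicPair.sub_mem_perp (h : IsHyperbolicPair e f) (heX : e ∈ perp X)
    (hfX : f ∈ perp X) {x : Fin m → ℂ} (hx : x ∈ perp X) :
    x - splitForm m f x • e - splitForm m e x • f ∈ perp (insert e (insert f X)) := by
  refine mem_perp_insert_insert.2 ⟨?_, ?_, ?_⟩
  · simp [h.left, h.pair]
  · simp [h.right, h.pair']
  · exact sub_mem (sub_mem hx (Submodule.smul_mem _ _ heX)) (Submodule.smul_mem _ _ hfX)

lemma IsHyperbolicPair.exists_eichler_right_eq_smul (h : IsHyperbolicPair e f) (heX : e ∈ perp X)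
    (hfX : f ∈ perp X) {x : Fin m → ℂ} (hx : x ∈ perp X) (hxx : splitForm m x x = 0)
    (hfx : splitForm m f x ≠ 0) :
    ∃ y ∈ perp (insert e (insert f X)), stdRep _ (eichler f y) x = splitForm m f x • e := by
  set F := splitForm m f x with hF
  set E := splitForm m e x with hE
  set w := x - F • e - E • f with hw
  have hwm := h.sub_mem_perp heX hfX hx
  obtain ⟨hew, hfw, -⟩ := mem_perp_insert_insert.1 hwm
  rw [← hF, ← hE, ← hw] at hwm hew hfw
  have hxw : x = F • e + E • f + w := by rw [hw]; module
  have hwe : splitForm m w e = 0 := by rw [splitForm_comm, hew]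
  have hwf : splitForm m w f = 0 := by rw [splitForm_comm, hfw]
  have hwx : splitForm m w x = splitForm m w w := by
    conv_lhs => rw [hxw]
    simp [hwe, hwf]
  have hiso : 2 * F * E + splitForm m w w = 0 := by
    rw [hxw] at hxx
    simp only [map_add, map_smul, LinearMap.add_apply, LinearMap.smul_apply, smul_eq_mul, h.left,
      h.right, h.pair, h.pair', hew, hfw, hwe, hwf] at hxx
    linear_combination hxx
  refine ⟨-F⁻¹ • w, Submodule.smul_mem _ _ hwm, ?_⟩
  rw [stdRep_eichler h.right (by simp [hfw]), eichlerMap_apply, ← hF]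
  simp only [map_smul, LinearMap.smul_apply, smul_eq_mul, hwx]
  have hww : splitForm m w w = -(2 * F * E) := by linear_combination hiso
  rw [hww]
  nth_rw 1 [hxw]
  match_scalars <;> field_simp <;> ring

lemma IsHyperbolicPair.exists_eichler_mul_mem_fixator (h : IsHyperbolicPair e f)
    (heX : e ∈ perp X) (hfX : f ∈ perp X) {g : specialOrthGroup m} (hg : g ∈ fixator X)
    (hge : stdRep _ g e = e) :
    ∃ y ∈ perp (insert e (insert f X)), eichler e y * g ∈ fixator (insert e (insert f X)) := by
  have hE : splitForm m e (stdRep _ g f) = 1 := by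
    conv_lhs => rw [← hge]
    rw [splitForm_stdRep, h.pair]
  obtain ⟨y, hy, hyg⟩ := h.symm.exists_eichler_right_eq_smul hfX heX (stdRep_mem_perp hg hfX)
    (by rw [splitForm_stdRep, h.right]) (by rw [hE]; exact one_ne_zero)
  rw [Set.insert_comm] at hy
  obtain ⟨hey, hfy, hyX⟩ := mem_perp_insert_insert.1 hy
  refine ⟨y, hy, mem_fixator.2 ?_⟩
  rintro x (rfl | rfl | hx)
  · rw [map_mul, Module.End.mul_apply, hge, stdRep_eichler h.left hey, eichlerMap_apply, h.left,
      splitForm_comm y, hey]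
    module
  · rw [map_mul, Module.End.mul_apply, hyg, hE, one_smul]
  · exact mem_fixator.1 (mul_mem (eichler_mem_fixator h.left heX hey hyX) hg) x hx

lemma IsHyperbolicPair.exists_eichler_left_ne_zero (h : IsHyperbolicPair e f) (heX : e ∈ perp X)
    (hfX : f ∈ perp X) {a : Fin m → ℂ} (ha : a ∈ perp (insert e (insert f X)))
    (haa : splitForm m a a ≠ 0) {x z : Fin m → ℂ}
    (hz : z ∈ perp X) (hzx : splitForm m z x ≠ 0) :
    ∃ y ∈ perp (insert e (insert f X)), splitForm m f (stdRep _ (eichler e y) x) ≠ 0 := by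
  have key : ∀ y ∈ perp (insert e (insert f X)), splitForm m f (stdRep _ (eichler e y) x) =
      splitForm m f x - splitForm m y x - splitForm m e x * (splitForm m y y / 2) := by
    intro y hy
    obtain ⟨hey, hfy, -⟩ := mem_perp_insert_insert.1 hy
    rw [stdRep_eichler h.left hey, eichlerMap_apply]
    simp [hfy, h.pair']
  by_contra! H
  have H' := fun y hy => (key y hy).symm.trans (H y hy)
  have hF : splitForm m f x = 0 := by simpa using H' 0 (zero_mem _)
  have h1 := H' a ha
  have h2 := H' (-a) (neg_mem ha)
  simp only [hF, map_neg, LinearMap.neg_apply, neg_neg] at h1 h2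
  have hE : splitForm m e x = 0 := by
    have : splitForm m e x * splitForm m a a = 0 := by linear_combination -h1 - h2
    exact (mul_eq_zero.1 this).resolve_right haa
  have h3 := H' _ (h.sub_mem_perp heX hfX hz)
  simp only [hF, hE, map_sub, map_smul, LinearMap.sub_apply, LinearMap.smul_apply] at h3
  simp at h3
  exact hzx h3

lemma IsHyperbolicPair.exists_eichler_mul_eichler_eq_smul (h : IsHyperbolicPair e f)
    (heX : e ∈ perp X) (hfX : f ∈ perp X) {a : Fin m → ℂ} (ha : a ∈ perp (insert e (insert f X)))
    (haa : splitForm m a a ≠ 0) {x z : Fin m → ℂ} (hx : x ∈ perp X) (hxx : splitForm m x x = 0)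
    (hz : z ∈ perp X) (hzx : splitForm m z x ≠ 0) :
    ∃ y ∈ perp (insert e (insert f X)), ∃ y' ∈ perp (insert e (insert f X)), ∃ c : ℂ, c ≠ 0 ∧
      stdRep _ (eichler f y' * eichler e y) x = c • e := by
  obtain ⟨y, hy, hne⟩ := h.exists_eichler_left_ne_zero heX hfX ha haa hz hzx
  obtain ⟨hey, -, hyX⟩ := mem_perp_insert_insert.1 hy
  obtain ⟨y', hy', h'⟩ := h.exists_eichler_right_eq_smul heX hfX
    (stdRep_mem_perp (eichler_mem_fixator h.left heX hey hyX) hx)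
    (by rw [splitForm_stdRep, hxx]) hne
  exact ⟨y, hy, y', hy', _, hne, by rw [map_mul, Module.End.mul_apply, h']⟩

lemma IsHyperbolicPair.fixator_le (h : IsHyperbolicPair e f) (heX : e ∈ perp X) (hfX : f ∈ perp X)
    {a : Fin m → ℂ} (ha : a ∈ perp (insert e (insert f X))) (haa : splitForm m a a ≠ 0)
    {S : Subgroup (specialOrthGroup m)}
    (hS : fixator (insert e (insert f X)) ≤ S)
    (hSt : ∀ c : ℂ, c ≠ 0 → pairTorus e f c ∈ S)
    (hSe : ∀ y ∈ perp (insert e (insert f X)), eichler e y ∈ S)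
    (hSf : ∀ y ∈ perp (insert e (insert f X)), eichler f y ∈ S) : fixator X ≤ S := by
  intro g hg
  obtain ⟨y, hy, y', hy', c, hc, hx⟩ := h.exists_eichler_mul_eichler_eq_smul heX hfX ha haa
    (stdRep_mem_perp hg heX) (by rw [splitForm_stdRep, h.left]) (stdRep_mem_perp hg hfX)
    (by rw [splitForm_stdRep, h.pair']; exact one_ne_zero)
  obtain ⟨hey, hfy, hyX⟩ := mem_perp_insert_insert.1 hy
  obtain ⟨hey', hfy', hyX'⟩ := mem_perp_insert_insert.1 hy'
  have hc' := inv_ne_zero hc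
  set u := pairTorus e f c⁻¹ * (eichler f y' * eichler e y) with hu
  have huS : u ∈ S := mul_mem (hSt _ hc') (mul_mem (hSf _ hy') (hSe _ hy))
  have huX : u ∈ fixator X := mul_mem (pairTorus_mem_fixator h heX hfX hc')
    (mul_mem (eichler_mem_fixator h.right hfX hfy' hyX') (eichler_mem_fixator h.left heX hey hyX))
  have hfix : stdRep _ (u * g) e = e := by
    rw [map_mul, Module.End.mul_apply, hu, map_mul, Module.End.mul_apply, hx, map_smul,
      h.stdRep_torus_left hc', smul_smul, mul_inv_cancel₀ hc, one_smul]
  obtain ⟨y'', hy'', hmem⟩ := h.exists_eichler_mul_mem_fixator heX hfX (mul_mem huX hg) hfix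
  rw [← mul_assoc] at hmem
  exact (S.mul_mem_cancel_left (mul_mem (hSe _ hy'') huS)).1 (hS hmem)

end Fixators

section HighestWeight

variable {m : ℕ} {U : Type*} [AddCommGroup U] [Module ℂ U] [FiniteDimensional ℂ U]
  (ρ : Representation ℂ (specialOrthGroup m) U) {e f : Fin m → ℂ}

lemma IsHyperbolicPair.isNilpotent_apply_eichler_sub_one (h : IsHyperbolicPair e f)
    {y : Fin m → ℂ} (hy : splitForm m e y = 0) (hyf : splitForm m f y = 0) :
    IsNilpotent (ρ (eichler e y) - 1) := by
  refine isNilpotent_sub_one_of_conj_pow ((Group.isUnit (eichler e y)).map ρ) fun R hR => ?_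
  have hR' : (R : ℂ) ≠ 0 := by exact_mod_cast hR.ne'
  refine ⟨⟨ρ (pairTorus e f R), ρ (pairTorus e f R)⁻¹, ?_, ?_⟩, ?_⟩
  · rw [← map_mul, mul_inv_cancel, map_one]
  · rw [← map_mul, inv_mul_cancel, map_one]
  · change ρ (pairTorus e f R) * ρ (eichler e y) * ρ (pairTorus e f R)⁻¹ = _
    rw [← map_mul, h.torus_mul_eichler hR' hy hyf, ← map_mul, mul_inv_cancel_right, ← map_pow,
      eichler_pow h.left hy]

lemma IsHyperbolicPair.eichler_apply_sub_self_mem_rootTorsion (h : IsHyperbolicPair e f)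
    {y : Fin m → ℂ} (hy : splitForm m e y = 0) (hyf : splitForm m f y = 0) {w : U} {ν : ℂ}
    (hw : ρ (pairTorus e f 2) w = ν • w) {A : Set ℂ} (hA : ∀ j : ℕ, 1 ≤ j → ν * 2 ^ j ∈ A) :
    ρ (eichler e y) w - w ∈ rootTorsion (ρ (pairTorus e f 2)) A := by
  refine apply_sub_self_mem_rootTorsion (h.isNilpotent_apply_eichler_sub_one ρ hy hyf) ?_ hw hA
  rw [← map_mul, h.torus_mul_eichler two_ne_zero hy hyf, map_mul, ← map_pow,
    eichler_pow h.left hy]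
  norm_num

variable {ρ} {X : Set (Fin m → ℂ)} {v : U}

lemma IsHyperbolicPair.eichler_right_mem_of_ne_zero (h : IsHyperbolicPair e f) (heX : e ∈ perp X)
    (hfX : f ∈ perp X) (hv : fixator (insert e (insert f X)) ≤ vectorStabilizer ρ v)
    (hvt : ∀ c : ℂ, c ≠ 0 → pairTorus e f c ∈ vectorStabilizer ρ v)
    (hve : ∀ y ∈ perp (insert e (insert f X)), eichler e y ∈ vectorStabilizer ρ v)
    {y : Fin m → ℂ} (hy : y ∈ perp (insert e (insert f X))) (hyy : splitForm m y y ≠ 0) :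
    eichler f y ∈ vectorStabilizer ρ v := by
  obtain ⟨hey, hfy, hyX⟩ := mem_perp_insert_insert.1 hy
  have hye : splitForm m y e = 0 := by rw [splitForm_comm, hey]
  set q := splitForm m y y with hq
  set y' := (2 * q⁻¹) • y with hy'
  have hey' : splitForm m e y' = 0 := by simp [hy', hey]
  have hfy' : splitForm m f y' = 0 := by simp [hy', hfy]
  have hyX' : y' ∈ perp X := Submodule.smul_mem _ _ hyX
  set g := eichler e y' * eichler f y with hg
  have hgX : g ∈ fixator X := mul_mem (eichler_mem_fixator h.left heX hey' hyX')
    (eichler_mem_fixator h.right hfX hfy hyX)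
  have hge : stdRep _ g e = (-(q / 2)) • f := by
    rw [hg, map_mul, Module.End.mul_apply, stdRep_eichler h.right hfy, stdRep_eichler h.left hey']
    simp only [hy', eichlerMap_apply, map_add, map_sub, map_smul, LinearMap.smul_apply, smul_eq_mul,
      h.left, h.pair', h.pair, hey, hfy, hye, ← hq, splitForm_comm y f]
    match_scalars <;> field_simp <;> ring
  set t := pairTorus e f 2 with ht
  have htX : t ∈ fixator X := pairTorus_mem_fixator h heX hfX two_ne_zero
  have hte : stdRep _ t e = (2 : ℂ) • e := h.stdRep_torus_left two_ne_zero
  have htf : stdRep _ t f = (2 : ℂ)⁻¹ • f := h.stdRep_torus_right two_ne_zero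
  have hgf : stdRep _ g⁻¹ f = (-(q / 2))⁻¹ • e := by
    have hq2 : -(q / 2) ≠ 0 := neg_ne_zero.2 (div_ne_zero hyy two_ne_zero)
    have : stdRep _ g⁻¹ (stdRep _ g e) = e := (stdRep _).inv_self_apply g e
    rw [hge, map_smul] at this
    rw [eq_inv_smul_iff₀ hq2, this]
  have hfix : stdRep _ (t * g⁻¹ * t * g) e = e := by
    simp only [map_mul, Module.End.mul_apply, hge, htf, map_smul, hgf, hte]
    match_scalars
    field_simp
  obtain ⟨y'', hy'', hmem⟩ := h.exists_eichler_mul_mem_fixator heX hfX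
    (mul_mem (mul_mem (mul_mem htX (inv_mem hgX)) htX) hgX) hfix
  have hk : t * g⁻¹ * t * g ∈ vectorStabilizer ρ v :=
    ((vectorStabilizer ρ v).mul_mem_cancel_left (hve _ hy'')).1 (hv hmem)
  have hk' : g⁻¹ * t * g ∈ vectorStabilizer ρ v := by
    refine ((vectorStabilizer ρ v).mul_mem_cancel_left (hvt 2 two_ne_zero)).1 ?_
    simpa only [mul_assoc] using hk
  set v' := ρ g v with hv'
  have htv' : ρ t v' = (1 : ℂ) • v' := by
    have := congrArg (ρ g) (mem_vectorStabilizer.1 hk')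
    rw [← Module.End.mul_apply, ← map_mul] at this
    rw [one_smul, hv', ← Module.End.mul_apply, ← map_mul, ← this]
    congr 2
    group
  have htv : ρ t v = (1 : ℂ) • v := by rw [one_smul]; exact hvt 2 two_ne_zero
  have hinv : eichler e (-y') * g = eichler f y := by
    rw [hg, ← mul_assoc, eichler_mul_eichler h.left (by simp [hey']) hey', neg_add_cancel,
      eichler_zero h.left, one_mul]
  have hz : ρ (eichler f y) v - v = (ρ (eichler e (-y')) v' - v') + (v' - v) := by
    rw [hv', ← Module.End.mul_apply, ← map_mul, hinv]
    abel
  have hswap : pairTorus f e 2 = t⁻¹ := h.torus_swap two_ne_zero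
  refine sub_eq_zero.1 (eq_zero_of_mem_rootTorsion_inv (D := ρ t) (D' := ρ (pairTorus f e 2))
    (A := {α | ∃ j : ℕ, α = 2 ^ j}) (B := {α | ∃ j : ℕ, 1 ≤ j ∧ α = 2 ^ j}) ?_ ?_ ?_ ?_ ?_)
  · rw [hswap, ← map_mul, mul_inv_cancel, map_one]
  · rw [hswap, ← map_mul, inv_mul_cancel, map_one]
  · rintro _ ⟨i, rfl⟩ ⟨j, hj, hij⟩
    have hij' : (2 : ℂ) ^ (i + j) = 1 := by
      rw [pow_add, ← hij, mul_inv_cancel₀ (pow_ne_zero _ two_ne_zero)]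
    have : (2 : ℕ) ^ (i + j) = 1 := by exact_mod_cast hij'
    rw [Nat.pow_eq_one] at this
    omega
  · rw [hz]
    refine add_mem (h.eichler_apply_sub_self_mem_rootTorsion ρ (by simp [hey']) (by simp [hfy'])
      htv' ?_) (mem_rootTorsion_of_eigenvector (c := 1) ?_ ?_)
    · exact fun j _ => ⟨j, one_mul _⟩
    · exact ⟨0, (pow_zero 2).symm⟩
    · rw [map_sub, htv', htv, smul_sub]
  · refine h.symm.eichler_apply_sub_self_mem_rootTorsion ρ hfy hey (ν := 1) ?_
      fun j hj => ⟨j, hj, by simp⟩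
    rw [hswap, one_smul]
    exact inv_mem (hvt 2 two_ne_zero)

lemma IsHyperbolicPair.eichler_right_mem (h : IsHyperbolicPair e f) (heX : e ∈ perp X)
    (hfX : f ∈ perp X) {a : Fin m → ℂ} (ha : a ∈ perp (insert e (insert f X)))
    (haa : splitForm m a a ≠ 0)
    (hv : fixator (insert e (insert f X)) ≤ vectorStabilizer ρ v)
    (hvt : ∀ c : ℂ, c ≠ 0 → pairTorus e f c ∈ vectorStabilizer ρ v)
    (hve : ∀ y ∈ perp (insert e (insert f X)), eichler e y ∈ vectorStabilizer ρ v)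
    {y : Fin m → ℂ} (hy : y ∈ perp (insert e (insert f X))) :
    eichler f y ∈ vectorStabilizer ρ v := by
  have key := fun z => h.eichler_right_mem_of_ne_zero (y := z) heX hfX hv hvt hve
  by_cases hyy : splitForm m y y = 0
  · have split : ∀ z ∈ perp (insert e (insert f X)), splitForm m z z ≠ 0 →
        splitForm m (y - z) (y - z) ≠ 0 → eichler f y ∈ vectorStabilizer ρ v := by
      intro z hz hzz hyz
      have hyzm := sub_mem hy hz
      rw [← sub_add_cancel y z, ← eichler_mul_eichler h.right (mem_perp_insert_insert.1 hyzm).2.1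
        (mem_perp_insert_insert.1 hz).2.1]
      exact mul_mem (key _ hyzm hyz) (key _ hz hzz)
    by_cases h1 : splitForm m (y - a) (y - a) = 0
    · refine split (-a) (neg_mem ha) (by simpa using haa) fun h2 => haa ?_
      simp only [map_sub, map_neg, LinearMap.sub_apply, LinearMap.neg_apply, hyy] at h1 h2
      linear_combination (h1 + h2) / 2
    · exact split a ha haa h1
  · exact key y hy hyy

/-- The inductive step: if `v` is fixed by the parabolic of a hyperbolic pair orthogonal to `X`,
then it is fixed by the whole fixator of `X`. -/
lemma IsHyperbolicPair.fixator_le_vectorStabilizer (h : IsHyperbolicPair e f) (heX : e ∈ perp X)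
    (hfX : f ∈ perp X) {a : Fin m → ℂ} (ha : a ∈ perp (insert e (insert f X)))
    (haa : splitForm m a a ≠ 0)
    (hv : fixator (insert e (insert f X)) ≤ vectorStabilizer ρ v)
    (hvt : ∀ c : ℂ, c ≠ 0 → pairTorus e f c ∈ vectorStabilizer ρ v)
    (hve : ∀ y ∈ perp (insert e (insert f X)), eichler e y ∈ vectorStabilizer ρ v) :
    fixator X ≤ vectorStabilizer ρ v :=
  h.fixator_le heX hfX ha haa hv hvt hve
    fun _ hy => h.eichler_right_mem heX hfX ha haa hv hvt hve hy

end HighestWeight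

section StandardFlag

variable {m : ℕ}

lemma isHyperbolicPair_single {i : Fin m} (hi : i ≠ i.rev) :
    IsHyperbolicPair (Pi.single i (1 : ℂ)) (Pi.single i.rev (1 : ℂ)) where
  left := by rw [splitForm_single_single, if_neg hi]
  right := by rw [splitForm_single_single, Fin.rev_rev, if_neg hi.symm]
  pair := by rw [splitForm_single_single, if_pos rfl]

/-- The basis vectors `e_i` and `e_{m-1-i}` with `i < j`. -/
def outerBasis (m j : ℕ) : Set (Fin m → ℂ) :=
  {x | ∃ i : Fin m, ((i : ℕ) < j ∨ (i.rev : ℕ) < j) ∧ x = Pi.single i 1}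

lemma outerBasis_zero : outerBasis m 0 = ∅ := by
  ext x
  simp [outerBasis]

lemma outerBasis_succ (j : Fin m) : outerBasis m (j + 1) =
    insert (Pi.single j 1) (insert (Pi.single j.rev 1) (outerBasis m j)) := by
  ext x
  simp only [outerBasis, Set.mem_ofPred_eq, Set.mem_insert_iff, Nat.lt_succ_iff_lt_or_eq]
  constructor
  · rintro ⟨i, (h | h) | (h | h), rfl⟩
    · exact .inr (.inr ⟨i, .inl h, rfl⟩)
    · exact .inl (by rw [Fin.ext h])
    · exact .inr (.inr ⟨i, .inr h, rfl⟩)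
    · exact .inr (.inl (by rw [← Fin.ext h, Fin.rev_rev]))
  · rintro (rfl | rfl | ⟨i, h | h, rfl⟩)
    · exact ⟨j, .inl (.inr rfl), rfl⟩
    · exact ⟨j.rev, .inr (.inr (by rw [Fin.rev_rev])), rfl⟩
    · exact ⟨i, .inl (.inl h), rfl⟩
    · exact ⟨i, .inr (.inl h), rfl⟩

lemma mem_perp_outerBasis {j : ℕ} {y : Fin m → ℂ} :
    y ∈ perp (outerBasis m j) ↔ ∀ i : Fin m, ((i : ℕ) < j ∨ (i.rev : ℕ) < j) → y i = 0 := by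
  rw [mem_perp]
  constructor
  · intro h i hi
    have := h _ ⟨i.rev, by rwa [Fin.rev_rev, or_comm], rfl⟩
    rwa [splitForm_single_left, Fin.rev_rev] at this
  · rintro h _ ⟨i, hi, rfl⟩
    rw [splitForm_single_left]
    exact h _ (by rwa [Fin.rev_rev, or_comm])

lemma gIsUniUpper_eichler_single {j : Fin m} (hj : j < j.rev) {y : Fin m → ℂ}
    (hy : y ∈ perp (outerBasis m (j + 1))) : GIsUniUpper (eichler (Pi.single j 1) y) := by
  rw [mem_perp_outerBasis] at hy
  have hyj : y j.rev = 0 := hy _ (.inr (by rw [Fin.rev_rev]; exact Nat.lt_succ_self _))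
  have entry : ∀ p q, ((eichler (Pi.single j 1) y : GL (Fin m) ℂ) : Matrix (Fin m) (Fin m) ℂ) p q =
      (if p = q then 1 else 0) + (if q = j.rev then y p else 0)
        - (if p = j then y q.rev else 0)
        - (if q = j.rev ∧ p = j then splitForm m y y / 2 else 0) := by
    intro p q
    rw [coe_apply_eq_stdRep, stdRep_eichler (isHyperbolicPair_single hj.ne).left
      (by rw [splitForm_single_left, hyj]), eichlerMap_apply, splitForm_single_single,
      splitForm_single_right]
    simp only [Pi.sub_apply, Pi.add_apply, Pi.smul_apply, Pi.single_apply, smul_eq_mul, ite_and,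
      mul_ite, ite_mul, mul_one, mul_zero, one_mul, zero_mul]
    congr 1
    split_ifs <;> rfl
  refine ⟨fun i => ?_, fun p q hqp => ?_⟩
  · rw [entry, if_pos rfl]
    have h1 : (if i = j.rev then y i else 0) = 0 := by
      split_ifs with h
      · rw [h, hyj]
      · rfl
    have h2 : (if i = j then y i.rev else 0) = 0 := by
      split_ifs with h
      · rw [h, hyj]
      · rfl
    have h3 : ¬ (i = j.rev ∧ i = j) := fun h => hj.ne (h.2.symm.trans h.1)
    rw [h1, h2, if_neg h3]
    ring
  · rw [entry, if_neg hqp.ne']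
    have h1 : (if q = j.rev then y p else 0) = 0 := by
      split_ifs with h
      · refine hy _ (.inr ?_)
        subst h
        have := Fin.rev_lt_iff.1 hqp
        exact Nat.lt_succ_of_lt this
      · rfl
    have h2 : (if p = j then y q.rev else 0) = 0 := by
      split_ifs with h
      · refine hy _ (.inr ?_)
        subst h
        rw [Fin.rev_rev]
        exact Nat.lt_succ_of_lt hqp
      · rfl
    have h3 : ¬ (q = j.rev ∧ p = j) := by
      rintro ⟨rfl, rfl⟩
      exact hj.not_gt hqp
    rw [h1, h2, if_neg h3]
    ring

lemma coe_pairTorus_single {j : Fin m} (hj : j ≠ j.rev) {c : ℂ} (hc : c ≠ 0) (p q : Fin m) :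
    ((pairTorus (Pi.single j 1) (Pi.single j.rev 1) c : GL (Fin m) ℂ) :
      Matrix (Fin m) (Fin m) ℂ) p q =
        if p = q then (if q = j then c else if q = j.rev then c⁻¹ else 1) else 0 := by
  rw [coe_apply_eq_stdRep, (isHyperbolicPair_single hj).stdRep_torus hc, pairTorusMap_apply,
    splitForm_single_single, splitForm_single_single, Fin.rev_rev]
  simp only [Pi.add_apply, Pi.smul_apply, Pi.single_apply, smul_eq_mul]
  split_ifs <;> simp_all

end StandardFlag

section HighestWeightTwo

variable {l : ℕ} {U : Type*} [AddCommGroup U] [Module ℂ U]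
  {ρ : Representation ℂ (specialOrthGroup (2 * l + 1)) U} {v : U}

lemma fixator_outerBasis_self_le {a : Fin l → ℤ} (hv : BIsHWVector ρ a v) :
    fixator (outerBasis (2 * l + 1) l) ≤ vectorStabilizer ρ v := by
  intro g hg
  rw [mem_fixator] at hg
  have hfix : ∀ i : Fin (2 * l + 1), (i : ℕ) ≠ l → stdRep _ g (Pi.single i 1) = Pi.single i 1 :=
    fun i hi => hg _ ⟨i, by rw [Fin.val_rev]; omega, rfl⟩
  have hcol : ∀ i j : Fin (2 * l + 1), (j : ℕ) ≠ l →
      ((g : GL (Fin (2 * l + 1)) ℂ) : Matrix _ _ ℂ) i j = if i = j then 1 else 0 := by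
    intro i j hj
    rw [coe_apply_eq_stdRep, hfix j hj, Pi.single_apply]
  have hdiag : GIsDiag g := by
    intro i j hij
    by_cases hj : (j : ℕ) = l
    · have hi : (i.rev : ℕ) ≠ l := by
        rw [Fin.val_rev]
        intro h
        exact hij (Fin.ext (by omega))
      have h := splitForm_stdRep g (Pi.single i.rev 1) (Pi.single j 1)
      rw [hfix _ hi, splitForm_single_left, splitForm_single_single, Fin.rev_rev,
        if_neg (Ne.symm hij)] at h
      rw [coe_apply_eq_stdRep, h]
    · rw [hcol i j hj, if_neg hij]
  rw [mem_vectorStabilizer, hv.2.2 g hdiag, Finset.prod_eq_one, one_smul]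
  intro i _
  rw [hcol _ _ (by simpa using i.2.ne), if_pos rfl, _root_.one_zpow]

lemma apply_pairTorus_single (hv : BIsHWVector ρ (fun i => if (i : ℕ) = 0 then 2 else 0) v)
    {j : Fin (2 * l + 1)} (hj : (j : ℕ) < l) {c : ℂ} (hc : c ≠ 0) :
    ρ (pairTorus (Pi.single j 1) (Pi.single j.rev 1) c) v =
      (if (j : ℕ) = 0 then c ^ 2 else 1) • v := by
  have hjr : j ≠ j.rev := by
    rw [Ne, Fin.ext_iff, Fin.val_rev]
    omega
  rw [hv.2.2 _ fun p q hpq => by rw [coe_pairTorus_single hjr hc, if_neg hpq]]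
  congr 1
  rw [Finset.prod_eq_single ⟨0, by omega⟩]
  · rw [coe_pairTorus_single hjr hc, if_pos rfl, if_neg (c := _ = j.rev)]
    · simp only [Fin.ext_iff, Fin.val_castLE, eq_comm (a := 0)]
      split_ifs <;> simp
    · rw [Fin.ext_iff, Fin.val_rev, Fin.val_castLE]
      simp only
      omega
  · intro i _ hi
    simp only
    rw [if_neg fun h => hi (Fin.ext h), _root_.zpow_zero]
  · simp

variable [FiniteDimensional ℂ U]

lemma fixator_outerBasis_le (hv : BIsHWVector ρ (fun i => if (i : ℕ) = 0 then 2 else 0) v)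
    {k : ℕ} (hk : k ≤ l) (hk0 : k ≠ 0) :
    fixator (outerBasis (2 * l + 1) k) ≤ vectorStabilizer ρ v := by
  induction hk using Nat.decreasingInduction with
  | self => exact fixator_outerBasis_self_le hv
  | of_succ k hk ih =>
    set j : Fin (2 * l + 1) := ⟨k, by omega⟩ with hj
    have hjl : (j : ℕ) < l := hk
    have hjr : j < j.rev := by
      rw [Fin.lt_def, Fin.val_rev]
      omega
    have hX : outerBasis (2 * l + 1) (k + 1) = _ := outerBasis_succ j
    refine (isHyperbolicPair_single hjr.ne).fixator_le_vectorStabilizer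
      (a := Pi.single ⟨l, by omega⟩ 1) ?_ ?_ ?_ ?_ ?_ ?_ ?_
    · refine mem_perp_outerBasis.2 fun i hi => Pi.single_eq_of_ne ?_ _
      rintro rfl
      rw [Fin.val_rev] at hi
      change k < k ∨ 2 * l + 1 - (k + 1) < k at hi
      omega
    · refine mem_perp_outerBasis.2 fun i hi => Pi.single_eq_of_ne ?_ _
      rintro rfl
      rw [Fin.rev_rev, Fin.val_rev] at hi
      change 2 * l + 1 - (k + 1) < k ∨ k < k at hi
      omega
    · rw [← hX]
      refine mem_perp_outerBasis.2 fun i hi => Pi.single_eq_of_ne ?_ _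
      rintro rfl
      rw [Fin.val_rev] at hi
      change l < k + 1 ∨ 2 * l + 1 - (l + 1) < k + 1 at hi
      omega
    · rw [splitForm_single_single, if_pos]
      · exact one_ne_zero
      · rw [Fin.ext_iff, Fin.val_rev]
        simp only
        omega
    · rw [← hX]
      exact ih (Nat.succ_ne_zero k)
    · intro c hc
      rw [mem_vectorStabilizer, apply_pairTorus_single hv hjl hc, if_neg hk0, one_smul]
    · rw [← hX]
      exact fun y hy => hv.2.1 _ (gIsUniUpper_eichler_single hjr hy)

lemma apply_eq_sq_smul (hl : 0 < l)
    (hv : BIsHWVector ρ (fun i => if (i : ℕ) = 0 then 2 else 0) v)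
    {g : specialOrthGroup (2 * l + 1)} {c : ℂ} (hc : c ≠ 0)
    (hg : stdRep _ g (Pi.single 0 1) = c • Pi.single 0 1) : ρ g v = c ^ 2 • v := by
  have h0 : (0 : Fin (2 * l + 1)) < Fin.rev 0 := by
    rw [Fin.lt_def, Fin.val_rev]
    simp
    omega
  have h := isHyperbolicPair_single h0.ne
  have hX : outerBasis (2 * l + 1) 1 = _ := outerBasis_succ 0
  simp only [Fin.val_zero, outerBasis_zero] at hX
  set t := pairTorus (Pi.single (0 : Fin (2 * l + 1)) (1 : ℂ)) (Pi.single (Fin.rev 0) 1) c with ht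
  have htg : stdRep _ (t⁻¹ * g) (Pi.single 0 1) = Pi.single 0 1 := by
    rw [map_mul, Module.End.mul_apply, hg, map_smul, ht, h.torus_inv hc,
      h.stdRep_torus_left (inv_ne_zero hc), smul_smul, mul_inv_cancel₀ hc, one_smul]
  obtain ⟨y, hy, hmem⟩ := h.exists_eichler_mul_mem_fixator (X := ∅) (by simp [mem_perp])
    (by simp [mem_perp]) (by simp [mem_fixator]) htg
  rw [← hX] at hy hmem
  have hfix : t⁻¹ * g ∈ vectorStabilizer ρ v :=
    ((vectorStabilizer ρ v).mul_mem_cancel_left (hv.2.1 _ (gIsUniUpper_eichler_single h0 hy))).1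
      (fixator_outerBasis_le hv hl one_ne_zero hmem)
  calc ρ g v = ρ t (ρ (t⁻¹ * g) v) := by
        rw [← Module.End.mul_apply, ← map_mul, mul_inv_cancel_left]
    _ = c ^ 2 • v := by
        rw [mem_vectorStabilizer.1 hfix, ht, apply_pairTorus_single hv (by simpa using hl) hc]
        simp

end HighestWeightTwo

section MatrixCoefficient

variable {m : ℕ} {U : Type*} [AddCommGroup U] [Module ℂ U]
  {ρ : Representation ℂ (specialOrthGroup m) U} {v : U} {e f : Fin m → ℂ}

lemma exists_splitForm_ne_zero {x : Fin m → ℂ} (hx : x ≠ 0) : ∃ z, splitForm m z x ≠ 0 := by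
  obtain ⟨i, hi⟩ := Function.ne_iff.1 hx
  exact ⟨Pi.single i.rev 1, by rwa [splitForm_single_left, Fin.rev_rev]⟩

lemma IsHyperbolicPair.left_ne_zero (h : IsHyperbolicPair e f) : e ≠ 0 := by
  rintro rfl
  simpa using h.pair

/-- A vector orthogonal to `f` can be moved by an Eichler transformation along `f` to an
eigenvector of the torus. -/
lemma IsHyperbolicPair.exists_eichler_eigenvector (h : IsHyperbolicPair e f) {x : Fin m → ℂ}
    (hf : splitForm m f x = 0) :
    ∃ y ∈ perp (insert e (insert f ∅)), ∃ c : ℂ, (c = 1 ∨ c = 2) ∧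
      stdRep _ (pairTorus f e 2) (stdRep _ (eichler f y) x) = c • stdRep _ (eichler f y) x := by
  have hmem : ∀ x : Fin m → ℂ, x ∈ perp ∅ := by simp [mem_perp]
  set E := splitForm m e x with hE
  set w := x - splitForm m f x • e - E • f with hw
  obtain ⟨hew, hfw, -⟩ := mem_perp_insert_insert.1 (h.sub_mem_perp (hmem e) (hmem f) (hmem x))
  rw [← hE, ← hw] at hew hfw
  have hxw : x = E • f + w := by rw [hw, hf]; module
  by_cases hw0 : w = 0
  · refine ⟨0, zero_mem _, 2, .inr rfl, ?_⟩
    rw [eichler_zero h.right, map_one, Module.End.one_apply, hxw, hw0, add_zero, map_smul,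
      h.symm.stdRep_torus_left two_ne_zero, smul_comm]
  · obtain ⟨z, hz⟩ := exists_splitForm_ne_zero hw0
    set z' := z - splitForm m f z • e - splitForm m e z • f with hz'
    have hz'm := h.sub_mem_perp (hmem e) (hmem f) (hmem z)
    rw [← hz'] at hz'm
    obtain ⟨hez, hfz, -⟩ := mem_perp_insert_insert.1 hz'm
    have hzw : splitForm m z' w = splitForm m z w := by simp [hz', hew, hfw]
    set y := (E * (splitForm m z w)⁻¹) • z' with hy
    have hfy : splitForm m f y = 0 := by simp [hy, hfz]
    have hyf : splitForm m y f = 0 := by rw [splitForm_comm, hfy]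
    have hyx : splitForm m y x = E := by
      rw [hxw, map_add, map_smul, hyf, hy]
      simp only [map_smul, LinearMap.smul_apply, hzw, smul_eq_mul]
      field_simp
      ring
    have hyw : stdRep _ (eichler f y) x = w := by
      rw [stdRep_eichler h.right hfy, eichlerMap_apply, hf, hyx]
      nth_rw 1 [hxw]
      module
    refine ⟨y, Submodule.smul_mem _ _ hz'm, 1, .inl rfl, ?_⟩
    rw [hyw, h.symm.stdRep_torus_of_orthogonal two_ne_zero hfw hew, one_smul]

lemma apply_apply_eigenvector (hv : ∀ (g : specialOrthGroup m) (c : ℂ), c ≠ 0 →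
      stdRep _ g e = c • e → ρ g v = c ^ 2 • v)
    {t g : specialOrthGroup m} {c : ℂ} (hc : c ≠ 0)
    (hg : stdRep _ t (stdRep _ g e) = c • stdRep _ g e) : ρ t (ρ g v) = c ^ 2 • ρ g v := by
  have h := hv (g⁻¹ * t * g) c hc (by
    rw [map_mul, map_mul, Module.End.mul_apply, Module.End.mul_apply, hg, map_smul,
      Representation.inv_self_apply])
  rw [← map_smul, ← h, ← Module.End.mul_apply, ← Module.End.mul_apply, ← map_mul, ← map_mul]
  congr 2
  group

variable [FiniteDimensional ℂ U]

lemma IsHyperbolicPair.exists_dual_apply_eq_sq (h : IsHyperbolicPair e f) (hv0 : v ≠ 0)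
    (hv : ∀ (g : specialOrthGroup m) (c : ℂ), c ≠ 0 → stdRep _ g e = c • e → ρ g v = c ^ 2 • v) :
    ∃ φ : U →ₗ[ℂ] ℂ, ∀ g, φ (ρ g v) = splitForm m f (stdRep _ g e) ^ 2 := by
  set t := pairTorus f e 2 with ht
  set K := rootTorsion (ρ t) {(2⁻¹ ^ 2 : ℂ)}ᶜ with hK
  have hvt : ρ t v = (2⁻¹ : ℂ) ^ 2 • v := hv _ _ (by simp) (h.symm.stdRep_torus_right two_ne_zero)
  have hvK : v ∉ K := notMem_rootTorsion_of_eigenvector (by simp) hv0 hvt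
  obtain ⟨φ, hφK, hφv⟩ := LinearMap.exists_extend_of_notMem (0 : K →ₗ[ℂ] ℂ) hvK 1
  have hφ : ∀ u ∈ K, φ u = 0 := fun u hu => LinearMap.congr_fun hφK ⟨u, hu⟩
  have hpow : ∀ (c : ℂ) (j : ℕ), c = 2⁻¹ ∨ c = 1 ∨ c = 2 → (1 ≤ j ∨ c ≠ 2⁻¹) →
      c ^ 2 * 2 ^ j ∈ ({(2⁻¹ ^ 2 : ℂ)}ᶜ : Set ℂ) := by
    intro c j hc hj hcj
    have hcj : c ^ 2 * 2 ^ j = 2⁻¹ ^ 2 := hcj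
    have key : ∀ i : ℕ, i ≠ 0 → (2 : ℂ) ^ i ≠ 1 := by
      intro i hi h1
      have : (2 : ℕ) ^ i = 1 := by exact_mod_cast h1
      rw [Nat.pow_eq_one] at this
      omega
    rcases hc with rfl | rfl | rfl
    · refine key j (by rcases hj with hj | hj; exacts [by omega, absurd rfl hj]) ?_
      exact mul_left_cancel₀ (by norm_num : (2⁻¹ ^ 2 : ℂ) ≠ 0) (hcj.trans (mul_one _).symm)
    · exact key (j + 2) (by omega) (by rw [pow_add]; linear_combination 4 * hcj)
    · exact key (j + 4) (by omega) (by rw [pow_add]; linear_combination 4 * hcj)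
  have move : ∀ (g : specialOrthGroup m) (y : Fin m → ℂ) (c : ℂ),
      y ∈ perp (insert e (insert f ∅)) → (c = 2⁻¹ ∨ c = 1 ∨ c = 2) →
      stdRep _ t (stdRep _ (eichler f y * g) e) = c • stdRep _ (eichler f y * g) e →
      φ (ρ g v) = φ (ρ (eichler f y * g) v) ∧ (c ≠ 2⁻¹ → φ (ρ (eichler f y * g) v) = 0) := by
    intro g y c hy hc hyc
    obtain ⟨hey, hfy, -⟩ := mem_perp_insert_insert.1 hy
    have hc0 : c ≠ 0 := by rcases hc with rfl | rfl | rfl <;> norm_num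
    have heig := apply_apply_eigenvector hv hc0 hyc
    constructor
    · have hback : ρ g v = ρ (eichler f (-y)) (ρ (eichler f y * g) v) := by
        rw [← Module.End.mul_apply, ← map_mul, ← mul_assoc,
          eichler_mul_eichler h.right (by simp [hfy]) hfy, neg_add_cancel, eichler_zero h.right,
          one_mul]
      rw [← sub_eq_zero, ← map_sub, hback]
      exact hφ _ (h.symm.eichler_apply_sub_self_mem_rootTorsion ρ (by simp [hfy]) (by simp [hey])
        heig fun j hj => hpow c j hc (.inl hj))
    · intro hc2
      refine hφ _ (mem_rootTorsion_of_eigenvector ?_ heig)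
      simpa using hpow c 0 hc (.inr hc2)
  refine ⟨φ, fun g => ?_⟩
  by_cases hfx : splitForm m f (stdRep _ g e) = 0
  · obtain ⟨y, hy, c, hc, hyc⟩ := h.exists_eichler_eigenvector hfx
    rw [← Module.End.mul_apply (stdRep _ (eichler f y)), ← map_mul] at hyc
    obtain ⟨h1, h2⟩ := move g y c hy (.inr hc) hyc
    rw [h1, h2, hfx]
    · norm_num
    · rcases hc with rfl | rfl <;> norm_num
  · obtain ⟨y, hy, hyx⟩ := h.exists_eichler_right_eq_smul (X := ∅) (by simp [mem_perp])
      (by simp [mem_perp]) (x := stdRep _ g e) (by simp [mem_perp])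
      (by rw [splitForm_stdRep, h.left]) hfx
    rw [← Module.End.mul_apply, ← map_mul] at hyx
    obtain ⟨h1, -⟩ := move g y 2⁻¹ hy (.inl rfl) (by
      rw [hyx, map_smul, h.symm.stdRep_torus_right two_ne_zero, smul_comm])
    rw [h1, hv _ _ hfx hyx, map_smul, hφv, smul_eq_mul, mul_one]

end MatrixCoefficient

section QuadraticMap

variable {m : ℕ} {e f a : Fin m → ℂ}

/-- The rank one endomorphism `z ↦ b(x, z) x`. -/
noncomputable def rankOne (x : Fin m → ℂ) : Module.End ℂ (Fin m → ℂ) :=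
  (splitForm m x).smulRight x

lemma rankOne_apply (x z : Fin m → ℂ) : rankOne x z = splitForm m x z • x := rfl

lemma trace_rankOne (x : Fin m → ℂ) :
    LinearMap.trace ℂ _ (rankOne x) = splitForm m x x := LinearMap.trace_smulRight _ _

lemma rankOne_mul_rankOne (x y : Fin m → ℂ) :
    rankOne x * rankOne y = splitForm m x y • (splitForm m y).smulRight x := by
  ext1 i
  refine LinearMap.ext_ring ?_
  simp [rankOne_apply, smul_smul, mul_comm]

lemma rankOne_stdRep (g : specialOrthGroup m) (x : Fin m → ℂ) :
    rankOne (stdRep _ g x) = stdRep _ g * rankOne x * stdRep _ g⁻¹ := by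
  refine LinearMap.ext fun z => ?_
  rw [rankOne_apply, splitForm_stdRep_left, Module.End.mul_apply, Module.End.mul_apply,
    rankOne_apply, map_smul]

lemma IsHyperbolicPair.exists_stdRep_eq (h : IsHyperbolicPair e f)
    (ha : a ∈ perp (insert e (insert f ∅))) (haa : splitForm m a a ≠ 0) {x : Fin m → ℂ}
    (hx : x ≠ 0) (hxx : splitForm m x x = 0) : ∃ g : specialOrthGroup m, stdRep _ g f = x := by
  obtain ⟨z, hz⟩ := exists_splitForm_ne_zero hx
  rw [Set.insert_comm] at ha
  obtain ⟨y, -, y', -, c, hc, hyx⟩ := h.symm.exists_eichler_mul_eichler_eq_smul (X := ∅)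
    (by simp [mem_perp]) (by simp [mem_perp]) ha haa (x := x) (z := z) (by simp [mem_perp]) hxx
    (by simp [mem_perp]) hz
  refine ⟨(eichler e y' * eichler f y)⁻¹ * pairTorus f e c, ?_⟩
  rw [map_mul, Module.End.mul_apply, h.symm.stdRep_torus_left hc, ← hyx,
    Representation.inv_self_apply]

/-- A trace-free self-adjoint endomorphism whose quadratic form vanishes on isotropic vectors is
zero. -/
lemma IsHyperbolicPair.eq_zero_of_isotropic (h : IsHyperbolicPair e f)
    {A : Module.End ℂ (Fin m → ℂ)} (hsymm : ∀ x y, splitForm m x (A y) = splitForm m y (A x))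
    (hiso : ∀ x, splitForm m x x = 0 → splitForm m x (A x) = 0)
    (htr : LinearMap.trace ℂ _ A = 0) : A = 0 := by
  set k := splitForm m e (A f) with hk
  have hfe : splitForm m f (A e) = k := hsymm f e
  have hee := hiso e h.left
  have hff := hiso f h.right
  have hW : ∀ w, splitForm m e w = 0 → splitForm m f w = 0 →
      splitForm m e (A w) = 0 ∧ splitForm m f (A w) = 0 ∧
        splitForm m w (A w) = k * splitForm m w w := by
    intro w hew hfw
    have hwe : splitForm m w e = 0 := by rw [splitForm_comm, hew]
    have hwf : splitForm m w f = 0 := by rw [splitForm_comm, hfw]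
    have key1 : ∀ s : ℂ, 2 * s * splitForm m e (A w) + s ^ 2 * (splitForm m w (A w)
        - k * splitForm m w w) - s ^ 3 * splitForm m w w * splitForm m f (A w) = 0 := by
      intro s
      have := hiso (e + s • w - (s ^ 2 * (splitForm m w w / 2)) • f) (by
        simp only [map_add, map_sub, map_smul, LinearMap.add_apply, LinearMap.sub_apply,
          LinearMap.smul_apply, smul_eq_mul, h.left, h.right, h.pair, h.pair', hew, hfw, hwe, hwf]
        ring)
      simp only [map_add, map_sub, map_smul, LinearMap.add_apply, LinearMap.sub_apply,
        LinearMap.smul_apply, smul_eq_mul, hee, hff, hfe, ← hk, hsymm w e, hsymm w f] at this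
      linear_combination this
    have key2 : ∀ s : ℂ, 2 * s * splitForm m f (A w) + s ^ 2 * (splitForm m w (A w)
        - k * splitForm m w w) - s ^ 3 * splitForm m w w * splitForm m e (A w) = 0 := by
      intro s
      have := hiso (f + s • w - (s ^ 2 * (splitForm m w w / 2)) • e) (by
        simp only [map_add, map_sub, map_smul, LinearMap.add_apply, LinearMap.sub_apply,
          LinearMap.smul_apply, smul_eq_mul, h.left, h.right, h.pair, h.pair', hew, hfw, hwe, hwf]
        ring)
      simp only [map_add, map_sub, map_smul, LinearMap.add_apply, LinearMap.sub_apply,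
        LinearMap.smul_apply, smul_eq_mul, hee, hff, hfe, ← hk, hsymm w e, hsymm w f] at this
      linear_combination this
    refine ⟨?_, ?_, ?_⟩
    · linear_combination (8 * (key1 1 - key1 (-1)) - (key1 2 - key1 (-2))) / 24
    · linear_combination (8 * (key2 1 - key2 (-1)) - (key2 2 - key2 (-2))) / 24
    · linear_combination (1 / 2 : ℂ) * (key1 1 + key1 (-1))
  have hquad : ∀ x, splitForm m x (A x) = k * splitForm m x x := by
    intro x
    set w := x - splitForm m f x • e - splitForm m e x • f with hw
    obtain ⟨hew, hfw, -⟩ := mem_perp_insert_insert.1 (h.sub_mem_perp (X := ∅) (x := x)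
      (by simp [mem_perp]) (by simp [mem_perp]) (by simp [mem_perp]))
    rw [← hw] at hew hfw
    obtain ⟨h1, h2, h3⟩ := hW w hew hfw
    have hwe : splitForm m w e = 0 := by rw [splitForm_comm, hew]
    have hwf : splitForm m w f = 0 := by rw [splitForm_comm, hfw]
    have hxw : x = splitForm m f x • e + splitForm m e x • f + w := by rw [hw]; module
    generalize splitForm m f x = F at hxw
    generalize splitForm m e x = E at hxw
    rw [hxw]
    simp only [map_add, map_smul, LinearMap.add_apply, LinearMap.smul_apply, smul_eq_mul, hee, hff,
      hfe, ← hk, hsymm w e, hsymm w f, h1, h2, h3, h.left, h.right, h.pair, h.pair', hew, hfw,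
      hwe, hwf]
    ring
  have hA : A = k • LinearMap.id := by
    refine LinearMap.ext fun y => ?_
    by_contra hne
    obtain ⟨z, hz⟩ := exists_splitForm_ne_zero (sub_ne_zero.2 hne)
    refine hz ?_
    have h1 := hquad (z + y)
    simp only [map_add, LinearMap.add_apply, hquad, hsymm y z, splitForm_comm y z] at h1
    simp only [LinearMap.smul_apply, LinearMap.id_apply, map_sub, map_smul, smul_eq_mul]
    linear_combination h1 / 2
  have hm : (m : ℂ) ≠ 0 := by
    rintro h0
    obtain rfl : m = 0 := by exact_mod_cast h0
    exact h.left_ne_zero (Subsingleton.elim _ _)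
  have hk0 : k = 0 := by
    rw [hA, map_smul, LinearMap.trace_id] at htr
    simpa [hm] using htr
  rw [hA, hk0, zero_smul]

end QuadraticMap

section InvariantForms

variable {m : ℕ} {G : Subgroup (GL (Fin m) ℂ)} {V W : Type*} [AddCommGroup V] [Module ℂ V]
  [AddCommGroup W] [Module ℂ W]

/-- A perfect pairing of a representation with itself yields an invariant vector from an invariant
linear form. -/
lemma repHasInvariant_of_dual {ρ : Representation ℂ G V} (E : V ≃ₗ[ℂ] Module.Dual ℂ V)
    (hE : ∀ g u u', E (ρ g u) (ρ g u') = E u u') {τ : Module.Dual ℂ V} (hτ0 : τ ≠ 0)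
    (hτ : ∀ g u, τ (ρ g u) = τ u) : RepHasInvariant ρ := by
  refine ⟨E.symm τ, by simpa using hτ0, fun g => E.injective (LinearMap.ext fun u => ?_)⟩
  rw [← ρ.self_inv_apply g u, hE, LinearEquiv.apply_symm_apply]
  exact (hτ g _).symm

variable [FiniteDimensional ℂ V] [FiniteDimensional ℂ W]

/-- The tensor product of two perfect pairings. -/
noncomputable def tensorPairing (E : V ≃ₗ[ℂ] Module.Dual ℂ V) (F : W ≃ₗ[ℂ] Module.Dual ℂ W) :
    V ⊗[ℂ] W ≃ₗ[ℂ] Module.Dual ℂ (V ⊗[ℂ] W) :=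
  (TensorProduct.congr E F).trans (TensorProduct.dualDistribEquiv ℂ V W)

lemma tensorPairing_tmul_tmul (E : V ≃ₗ[ℂ] Module.Dual ℂ V) (F : W ≃ₗ[ℂ] Module.Dual ℂ W)
    (v v' : V) (w w' : W) :
    tensorPairing E F (v ⊗ₜ w) (v' ⊗ₜ w') = E v v' * F w w' := rfl

lemma tensorPairing_tensorRep2 {ρ : Representation ℂ G V} {σ : Representation ℂ G W}
    {E : V ≃ₗ[ℂ] Module.Dual ℂ V} {F : W ≃ₗ[ℂ] Module.Dual ℂ W}
    (hE : ∀ g u u', E (ρ g u) (ρ g u') = E u u') (hF : ∀ g u u', F (σ g u) (σ g u') = F u u')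
    (g : G) (u u' : V ⊗[ℂ] W) :
    tensorPairing E F (tensorRep2 ρ σ g u) (tensorRep2 ρ σ g u') = tensorPairing E F u u' := by
  induction u using TensorProduct.induction_on with
  | zero => simp
  | add x y hx hy => simp only [map_add, LinearMap.add_apply, hx, hy]
  | tmul v w =>
    induction u' using TensorProduct.induction_on with
    | zero => simp
    | add x y hx hy => simp only [map_add, hx, hy]
    | tmul v' w' =>
      change tensorPairing E F (ρ g v ⊗ₜ σ g w) (ρ g v' ⊗ₜ σ g w') = _
      rw [tensorPairing_tmul_tmul, tensorPairing_tmul_tmul, hE, hF]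

end InvariantForms

section QuadraticOrbitMap

variable {m : ℕ} {U : Type*} [AddCommGroup U] [Module ℂ U]
  {ρ : Representation ℂ (specialOrthGroup m) U} {v : U} {e f a : Fin m → ℂ}

lemma span_orbit_eq_top (hirr : RepIsIrred ρ) (hv0 : v ≠ 0) :
    Submodule.span ℂ (Set.range fun g => ρ g v) = ⊤ := by
  refine (hirr.2 _ fun g x hx => ?_).resolve_left fun h => hv0 ?_
  · induction hx using Submodule.span_induction with
    | mem x hx =>
      obtain ⟨g', rfl⟩ := hx
      exact Submodule.subset_span ⟨g * g', by simp⟩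
    | zero => simp
    | add x y _ _ hx hy => rw [map_add]; exact add_mem hx hy
    | smul c x _ hx => rw [map_smul]; exact Submodule.smul_mem _ _ hx
  · have : v ∈ Submodule.span ℂ (Set.range fun g => ρ g v) :=
      Submodule.subset_span ⟨1, by simp⟩
    rwa [h, Submodule.mem_bot] at this

lemma IsHyperbolicPair.exists_linearMap_rankOne [FiniteDimensional ℂ U] (h : IsHyperbolicPair e f)
    (ha : a ∈ perp (insert e (insert f ∅))) (haa : splitForm m a a ≠ 0) (hirr : RepIsIrred ρ)
    (hv0 : v ≠ 0)
    (hv : ∀ (g : specialOrthGroup m) (c : ℂ), c ≠ 0 → stdRep _ g e = c • e → ρ g v = c ^ 2 • v) :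
    ∃ Ψ : U →ₗ[ℂ] Module.End ℂ (Fin m → ℂ), ∀ g, Ψ (ρ g v) = rankOne (stdRep _ g e) := by
  obtain ⟨φ, hφ⟩ := h.exists_dual_apply_eq_sq hv0 hv
  let p := Finsupp.linearCombination ℂ fun g => ρ g v
  let q := Finsupp.linearCombination ℂ fun g : specialOrthGroup m => rankOne (stdRep _ g e)
  have hp : LinearMap.range p = ⊤ := by
    rw [Finsupp.range_linearCombination, span_orbit_eq_top hirr hv0]
  have hpq : ∀ t, p t = 0 → q t = 0 := by
    intro t ht
    have hq : ∀ z, q t z = t.sum fun g c => c • rankOne (stdRep _ g e) z := by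
      intro z
      simp only [q, Finsupp.linearCombination_apply, Finsupp.sum, LinearMap.sum_apply,
        LinearMap.smul_apply]
    refine h.eq_zero_of_isotropic ?_ ?_ ?_
    · intro x y
      simp only [hq, Finsupp.sum, map_sum, map_smul, rankOne_apply, smul_eq_mul]
      refine Finset.sum_congr rfl fun g _ => ?_
      rw [splitForm_comm x, splitForm_comm y]
      ring
    · intro x hxx
      by_cases hx : x = 0
      · simp [hx]
      obtain ⟨g₀, rfl⟩ := h.exists_stdRep_eq ha haa hx hxx
      have := congrArg (fun u => φ (ρ g₀⁻¹ u)) ht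
      simp only [p, Finsupp.linearCombination_apply, Finsupp.sum, map_sum, map_smul, map_zero,
        ← Module.End.mul_apply, ← map_mul, hφ] at this
      simp only [hq, Finsupp.sum, map_sum, map_smul, rankOne_apply, smul_eq_mul]
      rw [← this]
      refine Finset.sum_congr rfl fun g _ => ?_
      rw [map_mul, Module.End.mul_apply, splitForm_comm (stdRep _ g e), splitForm_stdRep_left,
        smul_eq_mul]
      ring
    · simp only [q, Finsupp.linearCombination_apply, Finsupp.sum, map_sum, map_smul, trace_rankOne,
        splitForm_stdRep, h.left, smul_zero, Finset.sum_const_zero]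
  obtain ⟨s, hs⟩ := p.exists_rightInverse_of_surjective hp
  refine ⟨q ∘ₗ s, fun g => ?_⟩
  have h1 : q (s (ρ g v) - Finsupp.single g 1) = 0 := by
    refine hpq _ ?_
    rw [map_sub, sub_eq_zero]
    refine (LinearMap.congr_fun hs (ρ g v)).trans ?_
    simp [p]
  rw [map_sub, sub_eq_zero] at h1
  rw [LinearMap.comp_apply, h1]
  simp [q]

lemma linearMap_rankOne_equivariant (hirr : RepIsIrred ρ) (hv0 : v ≠ 0)
    {Ψ : U →ₗ[ℂ] Module.End ℂ (Fin m → ℂ)}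
    (hΨ : ∀ g, Ψ (ρ g v) = rankOne (stdRep _ g e)) (g : specialOrthGroup m) (u : U) :
    Ψ (ρ g u) = stdRep _ g * Ψ u * stdRep _ g⁻¹ := by
  have hu : u ∈ Submodule.span ℂ (Set.range fun g => ρ g v) := by
    rw [span_orbit_eq_top hirr hv0]
    trivial
  induction hu using Submodule.span_induction with
  | mem x hx =>
    obtain ⟨g', rfl⟩ := hx
    simp only
    rw [hΨ, ← Module.End.mul_apply, ← map_mul, hΨ, map_mul, Module.End.mul_apply, rankOne_stdRep]
  | zero => simp
  | add x y _ _ hx hy => simp only [map_add, hx, hy, mul_add, add_mul]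
  | smul c x _ hx => simp only [map_smul, hx, mul_smul_comm, smul_mul_assoc]

lemma repHasInvariant_cube [FiniteDimensional ℂ U] (h : IsHyperbolicPair e f)
    (ha : a ∈ perp (insert e (insert f ∅))) (haa : splitForm m a a ≠ 0) (hirr : RepIsIrred ρ)
    (hv0 : v ≠ 0)
    (hv : ∀ (g : specialOrthGroup m) (c : ℂ), c ≠ 0 → stdRep _ g e = c • e → ρ g v = c ^ 2 • v) :
    RepHasInvariant (tensorRep2 ρ (tensorRep2 ρ ρ)) := by
  obtain ⟨Ψ, hΨ⟩ := h.exists_linearMap_rankOne ha haa hirr hv0 hv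
  have hequiv := linearMap_rankOne_equivariant hirr hv0 hΨ
  have hsurj : ∀ x, x ≠ 0 → splitForm m x x = 0 → ∃ u, Ψ u = rankOne x := by
    intro x hx hxx
    rw [Set.insert_comm] at ha
    obtain ⟨g, rfl⟩ := h.symm.exists_stdRep_eq ha haa hx hxx
    exact ⟨_, hΨ g⟩
  have hconj : ∀ (g : specialOrthGroup m) (A : Module.End ℂ (Fin m → ℂ)),
      LinearMap.trace ℂ _ (stdRep _ g * A * stdRep _ g⁻¹) = LinearMap.trace ℂ _ A := by
    intro g A
    rw [LinearMap.trace_mul_comm, ← mul_assoc, ← map_mul, inv_mul_cancel, map_one, one_mul]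
  have hmul : ∀ (g : specialOrthGroup m) (A B : Module.End ℂ (Fin m → ℂ)),
      stdRep _ g * A * stdRep _ g⁻¹ * (stdRep _ g * B * stdRep _ g⁻¹) =
        stdRep _ g * (A * B) * stdRep _ g⁻¹ := by
    intro g A B
    calc _ = stdRep _ g * A * (stdRep _ g⁻¹ * stdRep _ g) * B * stdRep _ g⁻¹ := by
          simp only [mul_assoc]
      _ = _ := by rw [← map_mul, inv_mul_cancel, map_one, mul_one]; simp only [mul_assoc]
  let β : U →ₗ[ℂ] Module.Dual ℂ U :=
    ((LinearMap.mul ℂ (Module.End ℂ (Fin m → ℂ))).compl₁₂ Ψ Ψ).compr₂ (LinearMap.trace ℂ _)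
  have hβ : ∀ u u', β u u' = LinearMap.trace ℂ _ (Ψ u * Ψ u') := fun _ _ => rfl
  have hβρ : ∀ g u u', β (ρ g u) (ρ g u') = β u u' := by
    intro g u u'
    rw [hβ, hβ, hequiv, hequiv, hmul, hconj]
  obtain ⟨u₁, hu₁⟩ := hsurj e h.left_ne_zero h.left
  obtain ⟨u₂, hu₂⟩ := hsurj f h.symm.left_ne_zero h.right
  have hβ12 : β u₁ u₂ = 1 := by
    rw [hβ, hu₁, hu₂, rankOne_mul_rankOne, map_smul, LinearMap.trace_smulRight, h.pair, h.pair',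
      smul_eq_mul, mul_one]
  have hinj : Function.Injective β := by
    refine LinearMap.ker_eq_bot.1 ((hirr.2 _ fun g u hu => ?_).resolve_right fun htop => ?_)
    · rw [LinearMap.mem_ker] at hu ⊢
      refine LinearMap.ext fun u' => ?_
      rw [← ρ.self_inv_apply g u', hβρ, hu]
      rfl
    · have : u₁ ∈ LinearMap.ker β := by rw [htop]; trivial
      rw [LinearMap.mem_ker] at this
      rw [this] at hβ12
      exact zero_ne_one hβ12
  let E : U ≃ₗ[ℂ] Module.Dual ℂ U :=
    LinearMap.linearEquivOfInjective β hinj Subspace.dual_finrank_eq.symm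
  have hE : ∀ g u u', E (ρ g u) (ρ g u') = E u u' := hβρ
  let mulΨ : U ⊗[ℂ] U →ₗ[ℂ] Module.End ℂ (Fin m → ℂ) :=
    LinearMap.mul' ℂ _ ∘ₗ TensorProduct.map Ψ Ψ
  let τ : Module.Dual ℂ (U ⊗[ℂ] (U ⊗[ℂ] U)) :=
    LinearMap.trace ℂ _ ∘ₗ LinearMap.mul' ℂ _ ∘ₗ TensorProduct.map Ψ mulΨ
  have hτ : ∀ u u' u'', τ (u ⊗ₜ (u' ⊗ₜ u'')) = LinearMap.trace ℂ _ (Ψ u * (Ψ u' * Ψ u'')) :=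
    fun _ _ _ => rfl
  refine repHasInvariant_of_dual (tensorPairing E (tensorPairing E E))
    (tensorPairing_tensorRep2 hE (tensorPairing_tensorRep2 hE hE)) (τ := τ) ?_ fun g => ?_
  · set z := e + a - (splitForm m a a / 2) • f with hz
    obtain ⟨hea, hfa, -⟩ := mem_perp_insert_insert.1 ha
    have hae : splitForm m a e = 0 := by rw [splitForm_comm, hea]
    have haf : splitForm m a f = 0 := by rw [splitForm_comm, hfa]
    have hez : splitForm m e z = -(splitForm m a a / 2) := by
      simp [hz, h.left, h.pair, hea]
    have hfz : splitForm m f z = 1 := by simp [hz, h.right, h.pair', hfa]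
    have hzz : splitForm m z z = 0 := by
      rw [hz]
      simp only [map_add, map_sub, map_smul, LinearMap.add_apply, LinearMap.sub_apply,
        LinearMap.smul_apply, smul_eq_mul, h.left, h.right, h.pair, h.pair', hea, hfa, hae, haf]
      ring
    obtain ⟨u₃, hu₃⟩ := hsurj z (by rintro h0; simp [h0] at hfz) hzz
    intro h0
    have h1 : τ (u₁ ⊗ₜ (u₂ ⊗ₜ u₃)) = -(splitForm m a a / 2) := by
      have hcomp : rankOne e * (splitForm m z).smulRight f = (splitForm m z).smulRight e := by
        refine LinearMap.ext fun x => ?_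
        simp [rankOne_apply, h.pair]
      rw [hτ, hu₁, hu₂, hu₃, rankOne_mul_rankOne, hfz, one_smul, hcomp,
        LinearMap.trace_smulRight, splitForm_comm, hez]
    rw [h0, LinearMap.zero_apply, zero_eq_neg, div_eq_zero_iff] at h1
    exact h1.elim haa two_ne_zero
  · have : τ ∘ₗ tensorRep2 ρ (tensorRep2 ρ ρ) g = τ := by
      refine TensorProduct.ext' fun u t => ?_
      induction t using TensorProduct.induction_on with
      | zero => simp
      | add x y hx hy => simp only [TensorProduct.tmul_add, map_add, hx, hy]
      | tmul u' u'' =>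
        change τ (ρ g u ⊗ₜ (ρ g u' ⊗ₜ ρ g u'')) = _
        rw [hτ, hτ, hequiv, hequiv, hequiv, hmul, hmul, hconj]
    exact fun u => LinearMap.congr_fun this u

end QuadraticOrbitMap

section StandardCube

variable {m : ℕ}

/-- The product of the reflections in two orthogonal anisotropic vectors. -/
lemma exists_stdRep_eq_neg {u w : Fin m → ℂ} (hu : splitForm m u u ≠ 0) (hw : splitForm m w w ≠ 0)
    (huw : splitForm m u w = 0) :
    ∃ g : specialOrthGroup m, stdRep _ g u = -u ∧ stdRep _ g w = -w ∧
      ∀ x, splitForm m u x = 0 → splitForm m w x = 0 → stdRep _ g x = x := by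
  have hwu : splitForm m w u = 0 := by rw [splitForm_comm, huw]
  obtain ⟨s, hs⟩ := IsAlgClosed.exists_pow_nat_eq (splitForm m u u / splitForm m w w) two_pos
  have hs0 : s ≠ 0 := by
    rintro rfl
    rw [zero_pow two_ne_zero] at hs
    exact div_ne_zero hu hw hs.symm
  have hs' : splitForm m u u = s ^ 2 * splitForm m w w := by rw [hs, div_mul_cancel₀ _ hw]
  let h : (Fin m → ℂ) →ₗ[ℂ] (Fin m → ℂ) := LinearMap.id
    + (splitForm m u).smulRight ((splitForm m u u)⁻¹ • (s • w - u))
    - (splitForm m w).smulRight ((splitForm m w w)⁻¹ • (s⁻¹ • u + w))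
  have hh : ∀ x, h x = x + (splitForm m u x * (splitForm m u u)⁻¹) • (s • w - u)
      - (splitForm m w x * (splitForm m w w)⁻¹) • (s⁻¹ • u + w) := by
    intro x
    simp [h, mul_smul]
  obtain ⟨g, hg⟩ := exists_stdRep_eq_comp h fun x y => by
    simp only [hh, map_add, map_sub, map_smul, LinearMap.add_apply, LinearMap.sub_apply,
      LinearMap.smul_apply, smul_eq_mul, huw, hwu, splitForm_comm x u, splitForm_comm x w, hs']
    field_simp
    ring
  have h1 : h u = s • w := by
    rw [hh, hwu, mul_inv_cancel₀ hu]
    module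
  have h2 : h w = -(s⁻¹ • u) := by
    rw [hh, huw, mul_inv_cancel₀ hw]
    module
  refine ⟨g, ?_, ?_, fun x hux hwx => ?_⟩
  · rw [hg, h1, map_smul, h2, smul_neg, smul_inv_smul₀ hs0]
  · rw [hg, h2, map_neg, map_smul, h1, inv_smul_smul₀ hs0]
  · have : h x = x := by
      rw [hh, hux, hwx]
      module
    rw [hg, this, this]

lemma repr_tensorRep2_cube {G : Subgroup (GL (Fin m) ℂ)} {V ι : Type*} [AddCommGroup V] [Module ℂ V]
    (B : Module.Basis ι ℂ V) {ρ : Representation ℂ G V} {g : G} {ε : ι → ℂ}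
    (hε : ∀ i, ρ g (B i) = ε i • B i) (t : V ⊗[ℂ] (V ⊗[ℂ] V)) (i j k : ι) :
    (B.tensorProduct (B.tensorProduct B)).repr (tensorRep2 ρ (tensorRep2 ρ ρ) g t) (i, j, k) =
      ε i * ε j * ε k * (B.tensorProduct (B.tensorProduct B)).repr t (i, j, k) := by
  classical
  set C := B.tensorProduct (B.tensorProduct B)
  have : C.coord (i, j, k) ∘ₗ tensorRep2 ρ (tensorRep2 ρ ρ) g =
      (ε i * ε j * ε k) • C.coord (i, j, k) := by
    refine C.ext fun p => ?_
    obtain ⟨i', j', k'⟩ := p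
    have hC : tensorRep2 ρ (tensorRep2 ρ ρ) g (C (i', j', k')) =
        (ε i' * ε j' * ε k') • C (i', j', k') := by
      simp only [C, Module.Basis.tensorProduct_apply]
      change ρ g (B i') ⊗ₜ (ρ g (B j') ⊗ₜ ρ g (B k')) = _
      simp only [hε, ← TensorProduct.smul_tmul', TensorProduct.tmul_smul, smul_smul]
      congr 1
      ring
    rw [LinearMap.comp_apply, hC, map_smul, LinearMap.smul_apply, Module.Basis.coord_apply,
      Module.Basis.repr_self, Finsupp.single_apply]
    split_ifs with h
    · cases h; rfl
    · simp
  exact LinearMap.congr_fun this t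

lemma exists_orthogonal_basis_splitForm (m : ℕ) :
    ∃ B : Module.Basis (Fin m) ℂ (Fin m → ℂ), (∀ i, splitForm m (B i) (B i) ≠ 0) ∧
      ∀ i j, i ≠ j → splitForm m (B i) (B j) = 0 := by
  obtain ⟨B₀, hB₀⟩ := LinearMap.BilinForm.exists_orthogonal_basis
    (B := splitForm m) ⟨fun x y => splitForm_comm x y⟩
  obtain ⟨B, hB⟩ : ∃ B : Module.Basis (Fin m) ℂ (Fin m → ℂ),
      ∀ i j, i ≠ j → splitForm m (B i) (B j) = 0 := by
    refine ⟨B₀.reindex (finCongr (Module.finrank_fin_fun ℂ)), fun i j hij => ?_⟩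
    rw [Module.Basis.reindex_apply, Module.Basis.reindex_apply]
    exact hB₀ (by simpa using hij)
  refine ⟨B, fun i hi => ?_, hB⟩
  obtain ⟨z, hz⟩ := exists_splitForm_ne_zero (B.ne_zero i)
  refine hz ?_
  rw [splitForm_comm]
  have : splitForm m (B i) = 0 := B.ext fun j => by
    by_cases hij : i = j
    · rw [← hij, hi]; rfl
    · rw [hB i j hij]; rfl
  rw [this]
  rfl

lemma not_repHasInvariant_stdRep_cube (hm : 3 < m) :
    ¬ RepHasInvariant (tensorRep2 (stdRep (specialOrthGroup m))
      (tensorRep2 (stdRep (specialOrthGroup m)) (stdRep (specialOrthGroup m)))) := by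
  rintro ⟨t, ht0, ht⟩
  obtain ⟨B, hBB, hB⟩ := exists_orthogonal_basis_splitForm m
  refine ht0 ((B.tensorProduct (B.tensorProduct B)).ext_elem fun p => ?_)
  obtain ⟨i, j, k⟩ := p
  obtain ⟨q, hq⟩ : ∃ q, q ∉ ({i, j, k} : Finset (Fin m)) := by
    by_contra! h
    have h1 := Finset.card_le_card (fun q _ => h q : Finset.univ ⊆ ({i, j, k} : Finset (Fin m)))
    have h2 := Finset.card_le_three (a := i) (b := j) (c := k)
    rw [Finset.card_univ, Fintype.card_fin] at h1
    omega
  simp only [Finset.mem_insert, Finset.mem_singleton, not_or] at hq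
  obtain ⟨hqi, hqj, hqk⟩ := hq
  obtain ⟨p, hpq, hp⟩ : ∃ p, p ≠ q ∧ (if i = p then (-1 : ℂ) else 1) * (if j = p then -1 else 1) *
      (if k = p then -1 else 1) = -1 := by
    by_cases hij : i = j
    · subst hij
      refine ⟨k, Ne.symm hqk, ?_⟩
      by_cases hik : i = k <;> simp [hik]
    by_cases hik : i = k
    · subst hik
      exact ⟨j, Ne.symm hqj, by simp [hij]⟩
    · exact ⟨i, Ne.symm hqi, by simp [Ne.symm hij, Ne.symm hik]⟩
  obtain ⟨g, hgp, hgq, hg⟩ := exists_stdRep_eq_neg (hBB p) (hBB q) (hB p q hpq)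
  have hε : ∀ r, stdRep _ g (B r) =
      ((if r = p then (-1 : ℂ) else 1) * (if r = q then -1 else 1)) • B r := by
    intro r
    by_cases hrp : r = p
    · subst hrp
      simp [hpq, hgp]
    by_cases hrq : r = q
    · subst hrq
      simp [hrp, hgq]
    · rw [hg _ (hB _ _ (Ne.symm hrp)) (hB _ _ (Ne.symm hrq))]
      simp [hrp, hrq]
  have := repr_tensorRep2_cube B hε t i j k
  simp only [ht, if_neg (Ne.symm hqi), if_neg (Ne.symm hqj), if_neg (Ne.symm hqk), mul_one,
    hp] at this
  rw [map_zero, Finsupp.zero_apply]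
  linear_combination (1 / 2 : ℂ) * this

end StandardCube



theorem saturation_fails_SO_odd (l : ℕ) (hl : 2 ≤ l) :
    letI G := specialOrthGroup (2 * l + 1)
    letI std := stdRep G
    -- `3·ω₁` lies in the root lattice of `B_l` …
    ((3 : ℤ) • Pi.single (⟨0, by omega⟩ : Fin l) (1 : ℤ) : Fin l → ℤ) ∈
        AddSubgroup.closure (BRootsZ l) ∧
    -- … and `(V(2ω₁) ⊗ V(2ω₁) ⊗ V(2ω₁))^G ≠ 0` (saturation hypothesis at `m = 2`) …
    (∀ (U : Type) (_ : AddCommGroup U), ∀ (_ : Module ℂ U) (_ : FiniteDimensional ℂ U)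
        (ρ : Representation ℂ G U),
        RepIsIrred ρ → BOccurs ρ (fun i => if (i : ℕ) = 0 then 2 else 0) →
        RepHasInvariant (tensorRep2 ρ (tensorRep2 ρ ρ))) ∧
    -- … but `(V(ω₁) ⊗ V(ω₁) ⊗ V(ω₁))^G = 0`
    ¬ RepHasInvariant (tensorRep2 std (tensorRep2 std std)) := by
  refine ⟨?_, ?_, not_repHasInvariant_stdRep_cube (by omega)⟩
  · exact AddSubgroup.zsmul_mem _ (AddSubgroup.subset_closure (.inr ⟨_, .inl rfl⟩)) 3
  · rintro U _ _ _ ρ hirr ⟨v, hv⟩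
    have h0 : (0 : Fin (2 * l + 1)) ≠ Fin.rev 0 := by
      rw [Ne, Fin.ext_iff, Fin.val_rev, Fin.val_zero]
      omega
    have hn : Fin.rev (⟨l, by omega⟩ : Fin (2 * l + 1)) = ⟨l, by omega⟩ := by
      rw [Fin.ext_iff, Fin.val_rev]
      simp only
      omega
    refine repHasInvariant_cube (isHyperbolicPair_single h0)
      (a := Pi.single ⟨l, by omega⟩ 1) ?_ ?_ hirr hv.1
      fun g c hc hg => apply_eq_sq_smul (by omega) hv hc hg
    · refine mem_perp_insert_insert.2 ⟨?_, ?_, ?_⟩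
      · rw [splitForm_single_single, if_neg]
        rw [Fin.ext_iff, Fin.val_rev, Fin.val_zero]
        simp only
        omega
      · rw [splitForm_single_single, if_neg]
        rw [Fin.rev_rev, Fin.ext_iff, Fin.val_zero]
        simp only
        omega
      · rw [mem_perp]
        simp
    · rw [splitForm_single_single, if_pos hn.symm]
      exact one_ne_zero
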